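/- arXiv:2509.19901 — 3 statements merged into one kernel-verified Lean document; each statement's English description precedes it below -/
import Mathlib

section
/- Let F : ℝ^K × ℝ^X → ℝ be continuous on Δ_K × Δ_X and differentiable in p at every point of int Δ_K × Δ_X, with ‖∇_p F(p,μ)‖_∞ ≤ M there for some M < ∞. For (p,μ) ∈ Δ_K × Δ_X define C(p,μ) = conv{ g ∈ ℝ^K : there exist (p_n,μ_n) ∈ int Δ_K × Δ_X with (p_n,μ_n) → (p,μ) and ∇_p F(p_n,μ_n) → g }, and define LMO_p(p,μ) = conv{ q ∈ Δ_K : there exists f ∈ C(p,μ) with qᵀf = max_{q'∈Δ_K} q'ᵀf }. Then for every (p,μ), LMO_p(p,μ) is nonempty, convex and compact, and its graph {(p,μ,q) : (p,μ) ∈ Δ_K × Δ_X, q ∈ LMO_p(p,μ)} is a closed subset of Δ_K × Δ_X × Δ_K. -/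
open Filter

/-!
The graph of a convexified correspondence inside a compact set is closed: by Carathéodory's theorem
it is the projection, along a compact set of weights and points, of a closed set. The limiting
gradients have closed graph and lie in the compact ball of radius `M`, so the argument
applies to `C`. The maximizers attached to some `f ∈ C(p, μ)` then again form a projection of a
closed set along a compact one, they lie in the simplex, and the argument applies a second time.
-/

open scoped Topology

theorem isClosed_setOf_exists_mem_of_isCompact {Y Z : Type*} [TopologicalSpace Y]
    [TopologicalSpace Z] {B : Set Z} (hB : IsCompact B) {H : Set (Y × Z)} (hH : IsClosed H) :
    IsClosed {y | ∃ z ∈ B, (y, z) ∈ H} := by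
  have : CompactSpace B := isCompact_iff_compactSpace.mp hB
  have hclosed : IsClosed ((fun t : Y × B => (t.1, (t.2 : Z))) ⁻¹' H) := hH.preimage (by fun_prop)
  convert isClosedMap_fst_of_compactSpace _ hclosed
  ext y
  simp

section ConvexHull

variable {E : Type*} [AddCommGroup E] [Module ℝ E] [FiniteDimensional ℝ E]

theorem mem_convexHull_iff_exists_fin_finrank_succ {s : Set E} {x : E} :
    x ∈ convexHull ℝ s ↔ ∃ w ∈ stdSimplex ℝ (Fin (Module.finrank ℝ E + 1)),
      ∃ z : Fin (Module.finrank ℝ E + 1) → E, (∀ i, z i ∈ s) ∧ ∑ i, w i • z i = x := by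
  refine ⟨fun hx => ?_, ?_⟩
  · obtain ⟨x₀, hx₀⟩ : s.Nonempty := convexHull_nonempty_iff.mp ⟨x, hx⟩
    obtain ⟨ι, _, z, w, hz, hind, hw, hw_sum, rfl⟩ := eq_pos_convex_span_of_mem_convexHull hx
    have hcard : Fintype.card ι ≤ Fintype.card (Fin (Module.finrank ℝ E + 1)) := by
      rw [Fintype.card_fin]
      exact hind.card_le_finrank_succ.trans (Nat.succ_le_succ (Submodule.finrank_le _))
    obtain ⟨e⟩ := Function.Embedding.nonempty_of_card_le hcard
    -- Unused indices get weight `0` at the arbitrary point `x₀ ∈ s`.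
    have hw_off : ∀ j ∉ Set.range e, Function.extend e w 0 j = 0 :=
      fun j hj => Function.extend_apply' _ _ _ hj
    refine ⟨Function.extend e w 0, ⟨fun j => ?_, ?_⟩,
      Function.extend e z fun _ => x₀, fun j => ?_, ?_⟩
    · by_cases hj : j ∈ Set.range e
      · obtain ⟨i, rfl⟩ := hj
        simpa only [e.injective.extend_apply] using (hw i).le
      · exact (hw_off j hj).ge
    · rw [← hw_sum]
      exact (Fintype.sum_of_injective e e.injective _ _ hw_off
        fun i => (e.injective.extend_apply _ _ i).symm).symm
    · by_cases hj : j ∈ Set.range e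
      · obtain ⟨i, rfl⟩ := hj
        simpa only [e.injective.extend_apply] using hz ⟨i, rfl⟩
      · simpa only [Function.extend_apply' _ _ _ hj] using hx₀
    · exact (Fintype.sum_of_injective e e.injective _ _
        (fun j hj => by rw [hw_off j hj, zero_smul])
        fun i => by simp only [e.injective.extend_apply]).symm
  · rintro ⟨w, hw, z, hz, rfl⟩
    exact (convex_convexHull ℝ s).sum_mem (fun i _ => hw.1 i) hw.2
      fun i _ => subset_convexHull ℝ s (hz i)

theorem isClosed_graph_convexHull {Y : Type*} [TopologicalSpace Y] [TopologicalSpace E] [T2Space E]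
    [ContinuousAdd E] [ContinuousSMul ℝ E] {Γ : Y → Set E} {B : Set E} (hB : IsCompact B)
    (hΓB : ∀ y, Γ y ⊆ B) (hΓ : IsClosed {t : Y × E | t.2 ∈ Γ t.1}) :
    IsClosed {t : Y × E | t.2 ∈ convexHull ℝ (Γ t.1)} := by
  let N := Module.finrank ℝ E + 1
  let H : Set ((Y × E) × (Fin N → ℝ) × (Fin N → E)) :=
    {u | (∀ i, u.2.2 i ∈ Γ u.1.1) ∧ ∑ i, u.2.1 i • u.2.2 i = u.1.2}
  have hpoints : IsClosed {u : (Y × E) × (Fin N → ℝ) × (Fin N → E) | ∀ i, u.2.2 i ∈ Γ u.1.1} := by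
    simp only [Set.ofPred_forall]
    exact isClosed_iInter fun i => hΓ.preimage
      (f := fun u : (Y × E) × (Fin N → ℝ) × (Fin N → E) => (u.1.1, u.2.2 i)) (by fun_prop)
  have hH : IsClosed H := hpoints.inter (isClosed_eq (by fun_prop) (by fun_prop))
  have hcompact : IsCompact (stdSimplex ℝ (Fin N) ×ˢ Set.univ.pi fun _ : Fin N => B) :=
    (isCompact_stdSimplex ℝ _).prod (isCompact_univ_pi fun _ => hB)
  convert isClosed_setOf_exists_mem_of_isCompact hcompact hH using 1
  ext ⟨y, x⟩
  rw [Set.mem_ofPred_eq, mem_convexHull_iff_exists_fin_finrank_succ]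
  constructor
  · rintro ⟨w, hw, z, hz, hx⟩
    exact ⟨(w, z), ⟨hw, fun i _ => hΓB y (hz i)⟩, hz, hx⟩
  · rintro ⟨⟨w, z⟩, ⟨hw, -⟩, hz, hx⟩
    exact ⟨w, hw, z, hz, hx⟩

end ConvexHull

section LimitValues

variable {Y V : Type*} [TopologicalSpace Y] [TopologicalSpace V] {v : Y → V} {S : Set Y} {y : Y}

/-- The limits of `v` along sequences in `S` converging to `y`. For `v = ∇_p F` on
`S = int Δ_K × Δ_X`, these are the limiting gradients whose convex hull is `C(p, μ)`. -/
def limitValues (v : Y → V) (S : Set Y) (y : Y) : Set V :=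
  {g | ∃ z : ℕ → Y, (∀ n, z n ∈ S) ∧ Tendsto z atTop (𝓝 y) ∧
    Tendsto (fun n => v (z n)) atTop (𝓝 g)}

theorem limitValues_subset {B : Set V} (hB : IsClosed B) (hv : Set.MapsTo v S B) :
    limitValues v S y ⊆ B := by
  rintro g ⟨z, hzS, -, hg⟩
  exact hB.mem_of_tendsto hg (.of_forall fun n => hv (hzS n))

theorem limitValues_nonempty [FrechetUrysohnSpace Y] {B : Set V} (hB : IsSeqCompact B)
    (hv : Set.MapsTo v S B) (hy : y ∈ closure S) : (limitValues v S y).Nonempty := by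
  obtain ⟨z, hzS, hz⟩ := mem_closure_iff_seq_limit.mp hy
  obtain ⟨g, -, φ, hφ, hg⟩ := hB fun n => hv (hzS n)
  exact ⟨g, z ∘ φ, fun n => hzS (φ n), hz.comp hφ.tendsto_atTop, hg⟩

theorem graph_limitValues_eq_closure [FrechetUrysohnSpace (Y × V)] :
    {t : Y × V | t.2 ∈ limitValues v S t.1} = closure ((fun z => (z, v z)) '' S) := by
  ext ⟨y, g⟩
  rw [mem_closure_iff_seq_limit]
  constructor
  · rintro ⟨z, hzS, hz, hg⟩
    exact ⟨fun n => (z n, v (z n)), fun n => ⟨z n, hzS n, rfl⟩, hz.prodMk_nhds hg⟩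
  · rintro ⟨s, hs, hlim⟩
    choose z hzS hzs using hs
    obtain rfl : (fun n => (z n, v (z n))) = s := funext hzs
    exact ⟨z, hzS, hlim.fst_nhds, hlim.snd_nhds⟩

theorem isClosed_graph_limitValues [FrechetUrysohnSpace (Y × V)] :
    IsClosed {t : Y × V | t.2 ∈ limitValues v S t.1} := by
  rw [graph_limitValues_eq_closure]
  exact isClosed_closure

end LimitValues

section Maximizers

variable {E V : Type*} {b : E → V → ℝ} {Q : Set E}

/-- The points of `Q` that maximize the payoff `b · f` over `Q` for at least one `f ∈ C`: the
possible answers of a maximization oracle that is shown some element of `C`. -/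
def maximizers (b : E → V → ℝ) (Q : Set E) (C : Set V) : Set E :=
  {q | q ∈ Q ∧ ∃ f ∈ C, ∀ q' ∈ Q, b q' f ≤ b q f}

theorem maximizers_subset {C : Set V} : maximizers b Q C ⊆ Q :=
  fun _ hq => hq.1

variable [TopologicalSpace E]

theorem maximizers_nonempty (hQ : IsCompact Q) (hQ_nonempty : Q.Nonempty)
    (hb : ∀ f, ContinuousOn (fun q => b q f) Q) {C : Set V} (hC : C.Nonempty) :
    (maximizers b Q C).Nonempty := by
  obtain ⟨f, hf⟩ := hC
  obtain ⟨q, hq, hmax⟩ := hQ.exists_isMaxOn hQ_nonempty (hb f)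
  exact ⟨q, hq, f, hf, fun q' hq' => hmax hq'⟩

theorem isClosed_graph_maximizers {Y : Type*} [TopologicalSpace Y] [TopologicalSpace V]
    (hQ : IsClosed Q) (hb : Continuous fun t : E × V => b t.1 t.2) {Γ : Y → Set V} {B : Set V}
    (hB : IsCompact B) (hΓB : ∀ y, Γ y ⊆ B) (hΓ : IsClosed {t : Y × V | t.2 ∈ Γ t.1}) :
    IsClosed {t : Y × E | t.2 ∈ maximizers b Q (Γ t.1)} := by
  let H : Set ((Y × E) × V) := {u | u.2 ∈ Γ u.1.1 ∧ ∀ q' ∈ Q, b q' u.2 ≤ b u.1.2 u.2}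
  have hmax_closed : IsClosed {u : (Y × E) × V | ∀ q' ∈ Q, b q' u.2 ≤ b u.1.2 u.2} := by
    simp only [Set.ofPred_forall]
    exact isClosed_biInter fun q' _ => isClosed_le
      (hb.comp (f := fun u : (Y × E) × V => (q', u.2)) (by fun_prop))
      (hb.comp (f := fun u : (Y × E) × V => (u.1.2, u.2)) (by fun_prop))
  have hH : IsClosed H :=
    (hΓ.preimage (f := fun u : (Y × E) × V => (u.1.1, u.2)) (by fun_prop)).inter hmax_closed
  convert (hQ.preimage continuous_snd).inter (isClosed_setOf_exists_mem_of_isCompact hB hH) using 1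
  ext ⟨y, q⟩
  constructor
  · rintro ⟨hq, f, hf, hmax⟩
    exact ⟨hq, f, hΓB y hf, hf, hmax⟩
  · rintro ⟨hq, f, -, hf, hmax⟩
    exact ⟨hq, f, hf, hmax⟩

end Maximizers

section LMO

variable {Y E V : Type*} [TopologicalSpace Y]
  [AddCommGroup E] [Module ℝ E]
  [AddCommGroup V] [Module ℝ V] [TopologicalSpace V]
  {b : E → V → ℝ} {Q : Set E} {v : Y → V} {S : Set Y} {B : Set V} {y : Y}

/-- The convexified linear maximization oracle `LMO_p`, with the set `Q` of feasible points in the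
role of `Δ_K` and the payoff `b q f` in the role of `qᵀf`. -/
def lmo (b : E → V → ℝ) (Q : Set E) (v : Y → V) (S : Set Y) (y : Y) : Set E :=
  convexHull ℝ (maximizers b Q (convexHull ℝ (limitValues v S y)))

theorem lmo_subset (hQ : Convex ℝ Q) : lmo b Q v S y ⊆ Q :=
  convexHull_min maximizers_subset hQ

variable [TopologicalSpace E]

theorem lmo_nonempty [FrechetUrysohnSpace Y] (hQ : IsCompact Q) (hQ_nonempty : Q.Nonempty)
    (hb : ∀ f, ContinuousOn (fun q => b q f) Q) (hB : IsSeqCompact B) (hv : Set.MapsTo v S B)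
    (hy : y ∈ closure S) : (lmo b Q v S y).Nonempty :=
  (maximizers_nonempty hQ hQ_nonempty hb (limitValues_nonempty hB hv hy).convexHull).convexHull

variable [FrechetUrysohnSpace (Y × V)]
  [T2Space E] [ContinuousAdd E] [ContinuousSMul ℝ E] [FiniteDimensional ℝ E]
  [T2Space V] [ContinuousAdd V] [ContinuousSMul ℝ V] [FiniteDimensional ℝ V]

theorem isClosed_graph_lmo (hQ : IsCompact Q) (hb : Continuous fun t : E × V => b t.1 t.2)
    (hB : IsCompact B) (hB_convex : Convex ℝ B) (hv : Set.MapsTo v S B) :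
    IsClosed {t : Y × E | t.2 ∈ lmo b Q v S t.1} := by
  have hlim : ∀ y, limitValues v S y ⊆ B := fun _ => limitValues_subset hB.isClosed hv
  have hconv : ∀ y, convexHull ℝ (limitValues v S y) ⊆ B :=
    fun y => convexHull_min (hlim y) hB_convex
  exact isClosed_graph_convexHull hQ (fun _ => maximizers_subset) <|
    isClosed_graph_maximizers hQ.isClosed hb hB hconv <|
      isClosed_graph_convexHull hB hlim isClosed_graph_limitValues

theorem isCompact_lmo (hQ : IsCompact Q) (hQ_convex : Convex ℝ Q)
    (hb : Continuous fun t : E × V => b t.1 t.2) (hB : IsCompact B) (hB_convex : Convex ℝ B)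
    (hv : Set.MapsTo v S B) : IsCompact (lmo b Q v S y) :=
  hQ.of_isClosed_subset
    ((isClosed_graph_lmo hQ hb hB hB_convex hv).preimage (Continuous.prodMk_right y))
    (lmo_subset hQ_convex)

end LMO

section Simplex

variable {ι : Type*} [Fintype ι]

/-- The relative interior of the standard simplex, described by coordinates. -/
def openSimplex (ι : Type*) [Fintype ι] : Set (ι → ℝ) :=
  {p | p ∈ stdSimplex ℝ ι ∧ ∀ i, 0 < p i}

theorem barycenter_mem_openSimplex [Nonempty ι] :
    (stdSimplex.barycenter : stdSimplex ℝ ι).val ∈ openSimplex ι :=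
  ⟨stdSimplex.barycenter.2, fun _ => inv_pos.mpr (Nat.cast_pos.mpr Fintype.card_pos)⟩

theorem openSegment_subset_openSimplex {p c : ι → ℝ} (hp : p ∈ stdSimplex ℝ ι)
    (hc : c ∈ openSimplex ι) : openSegment ℝ p c ⊆ openSimplex ι := by
  rintro _ ⟨s, t, hs, ht, hst, rfl⟩
  refine ⟨convex_stdSimplex ℝ ι hp hc.1 hs.le ht.le hst, fun i => ?_⟩
  exact add_pos_of_nonneg_of_pos (mul_nonneg hs.le (hp.1 i)) (mul_pos ht (hc.2 i))

theorem stdSimplex_subset_closure_openSimplex : stdSimplex ℝ ι ⊆ closure (openSimplex ι) := by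
  intro p hp
  have : Nonempty ι := by
    by_contra h
    simpa [not_nonempty_iff.mp h] using hp.2
  exact closure_mono (openSegment_subset_openSimplex hp barycenter_mem_openSimplex)
    (segment_subset_closure_openSegment (left_mem_segment ℝ p _))

end Simplex

theorem stmt_3_general {ι X : Type*} [Fintype ι] [Fintype X] {M : ℝ}
    {v : (ι → ℝ) × (X → ℝ) → ι → ℝ} (hv : ∀ z ∈ openSimplex ι ×ˢ stdSimplex ℝ X, ‖v z‖ ≤ M) :
    let Λ := lmo dotProduct (stdSimplex ℝ ι) v (openSimplex ι ×ˢ stdSimplex ℝ X)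
    (∀ p ∈ stdSimplex ℝ ι, ∀ μ ∈ stdSimplex ℝ X,
      (Λ (p, μ)).Nonempty ∧ Convex ℝ (Λ (p, μ)) ∧ IsCompact (Λ (p, μ))) ∧
    IsClosed {t : (ι → ℝ) × (X → ℝ) × (ι → ℝ) |
      t.1 ∈ stdSimplex ℝ ι ∧ t.2.1 ∈ stdSimplex ℝ X ∧ t.2.2 ∈ Λ (t.1, t.2.1)} := by
  have hQ : IsCompact (stdSimplex ℝ ι) := isCompact_stdSimplex ℝ ι
  have hB : IsCompact (Metric.closedBall (0 : ι → ℝ) M) := isCompact_closedBall 0 M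
  have hB_convex : Convex ℝ (Metric.closedBall (0 : ι → ℝ) M) := convex_closedBall 0 M
  have hvB : Set.MapsTo v (openSimplex ι ×ˢ stdSimplex ℝ X) (Metric.closedBall 0 M) :=
    fun z hz => mem_closedBall_zero_iff.mpr (hv z hz)
  have hb : Continuous fun t : (ι → ℝ) × (ι → ℝ) => dotProduct t.1 t.2 :=
    continuous_fst.dotProduct continuous_snd
  refine ⟨fun p hp μ hμ => ⟨?_, convex_convexHull ℝ _, ?_⟩, ?_⟩
  · have hmem : (p, μ) ∈ closure (openSimplex ι ×ˢ stdSimplex ℝ X) :=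
      closure_prod_eq.symm.subset
        ⟨stdSimplex_subset_closure_openSimplex hp, subset_closure hμ⟩
    exact lmo_nonempty hQ ⟨p, hp⟩
      (fun f => (hb.comp (Continuous.prodMk_left f)).continuousOn) hB.isSeqCompact hvB hmem
  · exact isCompact_lmo hQ (convex_stdSimplex ℝ ι) hb hB hB_convex hvB
  · exact (hQ.isClosed.preimage continuous_fst).inter <|
      ((isClosed_stdSimplex ℝ X).preimage continuous_snd.fst).inter <|
        (isClosed_graph_lmo hQ hb hB hB_convex hvB).preimage
          (f := fun t : (ι → ℝ) × (X → ℝ) × (ι → ℝ) => ((t.1, t.2.1), t.2.2)) (by fun_prop)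

/-- For `F` continuous on `Δ_K × Δ_X` and differentiable in `p` on
`int Δ_K × Δ_X` with gradient `gradp` bounded by `M` in sup norm, the correspondence
`LMO_p(p,μ) = conv{ q ∈ Δ_K : ∃ f ∈ C(p,μ), qᵀf = max_{q'∈Δ_K} q'ᵀf }`, where `C(p,μ)` is
the convex hull of limits of gradients along interior sequences, is nonempty, convex and
compact valued, and its graph is a closed subset of `Δ_K × Δ_X × Δ_K`. -/
theorem stmt_3 {K : ℕ} (hK : 0 < K) {X : Type*} [Fintype X] [Nonempty X]
    (F : (Fin K → ℝ) → (X → ℝ) → ℝ) (M : ℝ)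
    (hcont : ContinuousOn (fun z : (Fin K → ℝ) × (X → ℝ) => F z.1 z.2)
      ((stdSimplex ℝ (Fin K)) ×ˢ (stdSimplex ℝ X)))
    (gradp : (Fin K → ℝ) → (X → ℝ) → (Fin K → ℝ))
    (hdiff : ∀ p, (p ∈ stdSimplex ℝ (Fin K) ∧ ∀ i, 0 < p i) → ∀ μ ∈ stdSimplex ℝ X,
      ∃ L : (Fin K → ℝ) →L[ℝ] ℝ, HasFDerivAt (fun p' => F p' μ) L p ∧
        ∀ w, L w = ∑ i, gradp p μ i * w i)
    (hbdd : ∀ p, (p ∈ stdSimplex ℝ (Fin K) ∧ ∀ i, 0 < p i) → ∀ μ ∈ stdSimplex ℝ X,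
      ‖gradp p μ‖ ≤ M)
    (C : (Fin K → ℝ) → (X → ℝ) → Set (Fin K → ℝ))
    (hC : ∀ p μ, C p μ = convexHull ℝ {g : Fin K → ℝ |
      ∃ z : ℕ → (Fin K → ℝ) × (X → ℝ),
        (∀ n, ((z n).1 ∈ stdSimplex ℝ (Fin K) ∧ ∀ i, 0 < (z n).1 i) ∧
          (z n).2 ∈ stdSimplex ℝ X) ∧
        Tendsto z atTop (nhds (p, μ)) ∧
        Tendsto (fun n => gradp (z n).1 (z n).2) atTop (nhds g)})
    (LMOp : (Fin K → ℝ) → (X → ℝ) → Set (Fin K → ℝ))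
    (hLMO : ∀ p μ, LMOp p μ = convexHull ℝ {q : Fin K → ℝ | q ∈ stdSimplex ℝ (Fin K) ∧
      ∃ f ∈ C p μ, ∀ q' ∈ stdSimplex ℝ (Fin K), ∑ i, q' i * f i ≤ ∑ i, q i * f i}) :
    (∀ p ∈ stdSimplex ℝ (Fin K), ∀ μ ∈ stdSimplex ℝ X,
      (LMOp p μ).Nonempty ∧ Convex ℝ (LMOp p μ) ∧ IsCompact (LMOp p μ)) ∧
    IsClosed {t : (Fin K → ℝ) × (X → ℝ) × (Fin K → ℝ) |
      t.1 ∈ stdSimplex ℝ (Fin K) ∧ t.2.1 ∈ stdSimplex ℝ X ∧ t.2.2 ∈ LMOp t.1 t.2.1} := by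
  have hlmo : ∀ p μ, LMOp p μ = lmo dotProduct (stdSimplex ℝ (Fin K)) (fun z => gradp z.1 z.2)
      (openSimplex (Fin K) ×ˢ stdSimplex ℝ X) (p, μ) := fun p μ => by rw [hLMO, hC]; rfl
  simpa only [hlmo] using stmt_3_general fun z hz => hbdd z.1 hz.1 z.2 hz.2
end

section
/- Under the hypotheses of the continuous-time Lyapunov theorem — F twice continuously differentiable on an open set U containing the trajectory, F(·,μ) concave on Δ_K for all μ ∈ Δ_X, F(p,·) convex on Δ_X for all p ∈ Δ_K, F continuous on Δ_K × Δ_X, and (p(·),μ(·)) absolutely continuous with, for almost every t, ṗ(t) = q(t) − p(t) for some q(t) ∈ Δ_K maximizing q'ᵀ∇_p F(p(t),μ(t)) over q' ∈ Δ_K and μ̇(t) = ν(t) − μ(t) for some ν(t) ∈ Δ_X minimizing ν'ᵀ∇_μ F(p(t),μ(t)) over ν' ∈ Δ_X — the duality gap vanishes: max_{q∈Δ_K} F(q,μ(t)) − min_{ν∈Δ_X} F(p(t),ν) → 0 as t → ∞, and consequently F(p(t),μ(t)) → F*, where F* is the saddle-point value of F on Δ_K × Δ_X. -/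
open MeasureTheory

/-!
Let `G = (∇_p F, -∇_μ F)` and let `V = max_{w ∈ S} G(z)(w - z)` be the Frank–Wolfe gap on
`S = A × B`. Concavity–convexity bounds the duality gap by `V` and makes `-G` monotone, so that
`G'(z)(v)(v) ≤ 0` in feasible directions `v`. Along `ż = w - z`, with `w` attaining the maximum,
the envelope theorem gives `V̇ = G'(z)(w - z)(w - z) - V ≤ -V`, hence `V` decays like `e^{-t}`.
-/

open Set Filter Topology Bornology
open scoped NNReal

section DualityGap

variable {ι κ : Type*} {f : ι → κ → ℝ} {i : ι} {j : κ} {c : ℝ}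

lemma iSup_sub_iInf_le_of_forall_sub_le [Nonempty ι] [Nonempty κ]
    (h : ∀ i' j', f i' j - f i j' ≤ c) : (⨆ i', f i' j) - ⨅ j', f i j' ≤ c := by
  have hsup : ∀ j', ⨆ i', f i' j ≤ c + f i j' := fun j' =>
    ciSup_le fun i' => sub_le_iff_le_add.1 (h i' j')
  have hinf : (⨆ i', f i' j) - c ≤ ⨅ j', f i j' :=
    le_ciInf fun j' => sub_le_iff_le_add'.2 (hsup j')
  linarith

lemma iSup_sub_iInf_nonneg (hi : BddBelow (range (f i))) (hj : BddAbove (range (f · j))) :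
    0 ≤ (⨆ i', f i' j) - ⨅ j', f i j' :=
  sub_nonneg.2 ((ciInf_le hi j).trans (le_ciSup hj i))

lemma abs_sub_iSup_iInf_le (hbelow : ∀ i', BddBelow (range (f i')))
    (hj : BddAbove (range (f · j))) :
    |f i j - ⨆ i', ⨅ j', f i' j'| ≤ (⨆ i', f i' j) - ⨅ j', f i j' := by
  have hlower : ∀ i', ⨅ j', f i' j' ≤ f i' j := fun i' => ciInf_le (hbelow i') j
  have hvalue_le : ⨆ i', ⨅ j', f i' j' ≤ ⨆ i', f i' j := ciSup_mono hj hlower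
  have hle_value : ⨅ j', f i j' ≤ ⨆ i', ⨅ j', f i' j' :=
    le_ciSup (f := fun i' => ⨅ j', f i' j') (hj.range_mono _ hlower) i
  have := hlower i
  have := le_ciSup hj i
  rw [abs_le]
  constructor <;> linarith

end DualityGap

section Gronwall

lemma le_mul_exp_of_ae_deriv_le {V : ℝ → ℝ} {a b c : ℝ} (hab : a ≤ b)
    (hV : AbsolutelyContinuousOnInterval V a b)
    (hderiv : ∀ᵐ t ∂volume.restrict (Ioc a b), deriv V t ≤ c * V t) :
    V b ≤ V a * Real.exp (c * (b - a)) := by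
  set E : ℝ → ℝ := fun t => Real.exp (-c * (t - b))
  have hE : ∀ t, HasDerivAt E (-c * E t) t := fun t => by
    simpa [E, mul_comm] using (((hasDerivAt_id t).sub_const b).const_mul (-c)).exp
  have hEac : AbsolutelyContinuousOnInterval E a b :=
    ContDiffOn.absolutelyContinuousOnInterval (by fun_prop)
  have hnonpos : ∫ t in a..b, deriv E t * V t + E t * deriv V t ≤ 0 := by
    rw [intervalIntegral.integral_of_le hab]
    refine integral_nonpos_of_ae ?_
    filter_upwards [hderiv] with t ht
    calc deriv E t * V t + E t * deriv V t = E t * (deriv V t - c * V t) := by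
          rw [(hE t).deriv]; ring
      _ ≤ 0 := mul_nonpos_of_nonneg_of_nonpos (Real.exp_pos _).le (sub_nonpos.2 ht)
  rw [hEac.integral_deriv_mul_eq_sub hV, sub_nonpos] at hnonpos
  calc V b = E b * V b := by simp [E]
    _ ≤ E a * V a := hnonpos
    _ = V a * Real.exp (c * (b - a)) := by rw [mul_comm]; simp only [E]; ring_nf

end Gronwall

section Primitive

variable {E : Type*} [NormedAddCommGroup E]

lemma locallyIntegrableOn_of_ae_norm_le {Y : Type*} [TopologicalSpace Y] [MeasurableSpace Y]
    [OpensMeasurableSpace Y] {m : Measure Y} [IsLocallyFiniteMeasure m] {v : Y → E} {s : Set Y}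
    {C : ℝ} (hv : AEStronglyMeasurable v (m.restrict s)) (hC : ∀ᵐ y ∂m.restrict s, ‖v y‖ ≤ C) :
    LocallyIntegrableOn v s m :=
  locallyIntegrableOn_of_locallyIntegrable_restrict
    ((memLp_top_of_bound hv C hC).locallyIntegrable le_top)

lemma intervalIntegrable_of_locallyIntegrableOn {m : Measure ℝ} {v : ℝ → E} {I : Set ℝ}
    (hv : LocallyIntegrableOn v I m) (hI : I.OrdConnected) {s t : ℝ} (hs : s ∈ I) (ht : t ∈ I) :
    IntervalIntegrable v m s t :=
  (hv.integrableOn_compact_subset (hI.uIcc_subset hs ht) isCompact_uIcc).intervalIntegrable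

variable [NormedSpace ℝ E] {z v : ℝ → E} {a : ℝ}

lemma lipschitzOnWith_of_eq_add_integral {I : Set ℝ} (hI : I.OrdConnected) {C : ℝ≥0}
    (hv : LocallyIntegrableOn v I) (hC : ∀ᵐ t ∂volume.restrict I, ‖v t‖ ≤ C) (ha : a ∈ I)
    (hz : ∀ t ∈ I, z t = z a + ∫ s in a..t, v s) : LipschitzOnWith C z I := by
  refine .of_dist_le_mul fun t ht s hs => ?_
  have hint {r : ℝ} (hr : r ∈ I) := intervalIntegrable_of_locallyIntegrableOn hv hI ha hr
  rw [dist_eq_norm, hz t ht, hz s hs, add_sub_add_left_eq_sub,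
    intervalIntegral.integral_interval_sub_left (hint ht) (hint hs)]
  refine intervalIntegral.norm_integral_le_of_norm_le_const_ae ?_
  filter_upwards [(ae_restrict_iff' hI.measurableSet).1 hC] with r hr hrs
  exact hr (hI.uIcc_subset hs ht (uIoc_subset_uIcc hrs))

lemma ae_hasDerivAt_of_eq_add_integral [CompleteSpace E] (hv : LocallyIntegrableOn v (Ici a))
    (hz : ∀ t ≥ a, z t = z a + ∫ s in a..t, v s) :
    ∀ᵐ t ∂volume.restrict (Ici a), HasDerivAt z (v t) t := by
  have hderiv : ∀ᵐ t, ∀ n : ℕ, t ∈ uIcc a (a + n) → ∀ c ∈ uIcc a (a + n),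
      HasDerivAt (fun t => ∫ s in c..t, v s) (v t) t :=
    ae_all_iff.2 fun n =>
      (intervalIntegrable_of_locallyIntegrableOn hv ordConnected_Ici self_mem_Ici
        (by simp)).ae_hasDerivAt_integral
  rw [← restrict_Ioi_eq_restrict_Ici, ae_restrict_iff' measurableSet_Ioi]
  filter_upwards [hderiv] with t ht hat
  obtain ⟨n, hn⟩ := exists_nat_ge (t - a)
  have hmem : t ∈ uIcc a (a + n) := mem_uIcc_of_le (le_of_lt hat) (by linarith)
  refine ((ht n hmem a left_mem_uIcc).const_add (z a)).congr_of_eventuallyEq ?_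
  filter_upwards [lt_mem_nhds hat] with s hs using hz s hs.le

end Primitive

section FrankWolfeGap

variable {E : Type*} [NormedAddCommGroup E] [NormedSpace ℝ E] {S : Set E}
  {G : E → E →L[ℝ] ℝ} {ℓ : E →L[ℝ] ℝ} {x w : E}

/-- The support function of `S`, on the dual space. It is the junk value `0` at functionals that
are unbounded above on `S`. -/
noncomputable def supportFunction (S : Set E) (ℓ : E →L[ℝ] ℝ) : ℝ :=
  ⨆ w : S, ℓ w

lemma le_supportFunction (hS : IsBounded S) (hw : w ∈ S) : ℓ w ≤ supportFunction S ℓ := by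
  have hbdd : BddAbove (ℓ '' S) := (ℓ.lipschitz.isBounded_image hS).bddAbove
  rw [image_eq_range] at hbdd
  exact le_ciSup (f := fun w : S => ℓ w) hbdd ⟨w, hw⟩

lemma supportFunction_eq_of_isMaxOn (h : IsMaxOn ℓ S w) (hw : w ∈ S) : supportFunction S ℓ = ℓ w :=
  h.iSup_eq hw

lemma exists_lipschitzWith_supportFunction (hS : IsBounded S) :
    ∃ K, LipschitzWith K (supportFunction S) := by
  obtain rfl | hne := S.eq_empty_or_nonempty
  · exact ⟨0, by simp [supportFunction, LipschitzWith]⟩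
  have := hne.to_subtype
  obtain ⟨R, hR⟩ := hS.exists_norm_le
  refine ⟨R.toNNReal, .of_le_add_mul' R fun ℓ ℓ' => ciSup_le fun w => ?_⟩
  have hdiff : (ℓ - ℓ') w ≤ R * dist ℓ ℓ' :=
    calc (ℓ - ℓ') w ≤ ‖ℓ - ℓ'‖ * ‖(w : E)‖ := (le_abs_self _).trans ((ℓ - ℓ').le_opNorm _)
      _ ≤ ‖ℓ - ℓ'‖ * R := by gcongr; exact hR w w.2
      _ = R * dist ℓ ℓ' := by rw [mul_comm, dist_eq_norm]
  have := le_supportFunction (ℓ := ℓ') hS w.2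
  rw [sub_apply] at hdiff
  linarith

/-- The Frank–Wolfe gap `sup_{w ∈ S} G(x)(w - x)` of a covector field `G` at `x`: how much a linear
step from `x` inside `S` can gain. It is the Lyapunov function of the best-response dynamics. -/
noncomputable def frankWolfeGap (S : Set E) (G : E → E →L[ℝ] ℝ) (x : E) : ℝ :=
  supportFunction S (G x) - G x x

lemma apply_sub_le_frankWolfeGap (hS : IsBounded S) (hw : w ∈ S) :
    G x (w - x) ≤ frankWolfeGap S G x := by
  rw [map_sub]
  exact sub_le_sub_right (le_supportFunction hS hw) _

lemma frankWolfeGap_eq_of_isMaxOn (h : IsMaxOn (G x) S w) (hw : w ∈ S) :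
    frankWolfeGap S G x = G x (w - x) := by
  rw [frankWolfeGap, supportFunction_eq_of_isMaxOn h hw, map_sub]

lemma locallyLipschitzOn_frankWolfeGap (hS : IsBounded S) {T : Set E}
    (hG : ∀ x ∈ T, ContDiffAt ℝ 1 G x) : LocallyLipschitzOn T (frankWolfeGap S G) := by
  intro x hx
  obtain ⟨K, hK⟩ := exists_lipschitzWith_supportFunction hS
  obtain ⟨K₁, t₁, ht₁, h₁⟩ := (hG x hx).exists_lipschitzOnWith
  obtain ⟨K₂, t₂, ht₂, h₂⟩ := ((hG x hx).clm_apply contDiffAt_id).exists_lipschitzOnWith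
  refine ⟨K * K₁ + K₂, t₁ ∩ t₂, mem_nhdsWithin_of_mem_nhds (inter_mem ht₁ ht₂), ?_⟩
  exact (hK.comp_lipschitzOnWith (h₁.mono inter_subset_left)).sub (h₂.mono inter_subset_right)

/-- Envelope theorem: the gap may be differentiated with the maximiser `w` held fixed, since
`frankWolfeGap S G (z s) - G (z s) (w - z s)` is nonnegative and vanishes at `s = t`. -/
lemma deriv_frankWolfeGap_comp {z : ℝ → E} {t : ℝ} (hS : IsBounded S) (hw : w ∈ S)
    (hmax : IsMaxOn (G (z t)) S w) (hG : DifferentiableAt ℝ G (z t))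
    (hz : HasDerivAt z (w - z t) t) (hgap : DifferentiableAt ℝ (frankWolfeGap S G ∘ z) t) :
    deriv (frankWolfeGap S G ∘ z) t =
      fderiv ℝ G (z t) (w - z t) (w - z t) - frankWolfeGap S G (z t) := by
  have hfixed : HasDerivAt (fun s => G (z s) (w - z s))
      (fderiv ℝ G (z t) (w - z t) (w - z t) + G (z t) (-(w - z t))) t :=
    (hG.hasFDerivAt.comp_hasDerivAt t hz).clm_apply (hz.const_sub w)
  have hmin : IsLocalMin (fun s => (frankWolfeGap S G ∘ z) s - G (z s) (w - z s)) t := by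
    refine .of_forall fun s => ?_
    simpa [frankWolfeGap_eq_of_isMaxOn hmax hw] using apply_sub_le_frankWolfeGap (x := z s) hS hw
  have hcritical := hmin.hasDerivAt_eq_zero (hgap.hasDerivAt.sub hfixed)
  rw [map_neg, ← frankWolfeGap_eq_of_isMaxOn hmax hw] at hcritical
  linarith

theorem frankWolfeGap_le_mul_exp {z w : ℝ → E} {C : ℝ≥0} (hS : IsBounded S)
    (hzlip : LipschitzOnWith C z (Ici 0)) (hG : ∀ t ≥ 0, ContDiffAt ℝ 1 G (z t))
    (hflow : ∀ᵐ t ∂volume.restrict (Ici 0), HasDerivAt z (w t - z t) t)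
    (hmax : ∀ᵐ t ∂volume.restrict (Ici 0), w t ∈ S ∧ IsMaxOn (G (z t)) S (w t))
    (hneg : ∀ t ≥ 0, ∀ w' ∈ S, fderiv ℝ G (z t) (w' - z t) (w' - z t) ≤ 0)
    {T : ℝ} (hT : 0 ≤ T) :
    frankWolfeGap S G (z T) ≤ frankWolfeGap S G (z 0) * Real.exp (-T) := by
  have hzT : LipschitzOnWith C z (Icc 0 T) := hzlip.mono Icc_subset_Ici_self
  have hgapT : LocallyLipschitzOn (z '' Icc 0 T) (frankWolfeGap S G) :=
    locallyLipschitzOn_frankWolfeGap hS (forall_mem_image.2 fun t ht => hG t ht.1)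
  obtain ⟨K, hK⟩ := hgapT.exists_lipschitzOnWith_of_compact
    (isCompact_Icc.image_of_continuousOn hzT.continuousOn)
  have hac : AbsolutelyContinuousOnInterval (frankWolfeGap S G ∘ z) 0 T := by
    rw [← uIcc_of_le hT] at hK hzT
    exact (hK.comp hzT (mapsTo_image z _)).absolutelyContinuousOnInterval
  have hderiv : ∀ᵐ t ∂volume.restrict (Ioc 0 T),
      deriv (frankWolfeGap S G ∘ z) t ≤ -1 * (frankWolfeGap S G ∘ z) t := by
    have hsub : Ioc 0 T ⊆ Ici 0 := Ioc_subset_Icc_self.trans Icc_subset_Ici_self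
    filter_upwards [ae_restrict_of_ae hac.ae_differentiableAt,
      ae_restrict_of_ae_restrict_of_subset hsub hflow,
      ae_restrict_of_ae_restrict_of_subset hsub hmax,
      ae_restrict_mem measurableSet_Ioc] with t hdiff hz hw ht
    have hgap := hdiff (by rw [uIcc_of_le hT]; exact Ioc_subset_Icc_self ht)
    have hGt := (hG t (hsub ht)).differentiableAt one_ne_zero
    rw [deriv_frankWolfeGap_comp hS hw.1 hw.2 hGt hz hgap, Function.comp_apply]
    linarith [hneg t (hsub ht) (w t) hw.1]
  simpa using le_mul_exp_of_ae_deriv_le hT hac hderiv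

/-- Divide the monotonicity inequality at `y = x + e • (w - x)` by `e ^ 2` and let `e → 0⁺`. -/
lemma fderiv_apply_apply_nonpos_of_eventually (hG : DifferentiableAt ℝ G x) (hS : Convex ℝ S)
    (hx : x ∈ S) (hw : w ∈ S) (hmono : ∀ᶠ y in 𝓝[S] x, (G y - G x) (y - x) ≤ 0) :
    fderiv ℝ G x (w - x) (w - x) ≤ 0 := by
  let line : ℝ → E := AffineMap.lineMap x w
  have hline : HasDerivAt line (w - x) 0 := AffineMap.hasDerivAt_lineMap
  have hline0 : line 0 = x := AffineMap.lineMap_apply_zero x w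
  have hGline : HasDerivAt (fun e => G (line e) (w - x)) (fderiv ℝ G x (w - x) (w - x)) 0 := by
    simpa only [Function.comp_apply, map_zero, add_zero] using
      (hG.hasFDerivAt.comp_hasDerivAt_of_eq 0 hline hline0.symm).clm_apply
        (hasDerivAt_const 0 (w - x))
  have hfeasible : Tendsto line (𝓝[>] 0) (𝓝[S] x) := by
    refine tendsto_nhdsWithin_iff.2 ⟨?_, ?_⟩
    · simpa only [hline0] using hline.continuousAt.tendsto.mono_left nhdsWithin_le_nhds
    · filter_upwards [Ioo_mem_nhdsGT one_pos] with e he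
      exact hS.lineMap_mem hx hw ⟨he.1.le, he.2.le⟩
  refine le_of_tendsto ((hasDerivWithinAt_iff_tendsto_slope' self_notMem_Ioi).1
    (hGline.hasDerivWithinAt (s := Ioi 0))) ?_
  filter_upwards [hfeasible.eventually hmono, self_mem_nhdsWithin] with e he hpos
  have hscaled : (G (line e) - G x) (line e - x) =
      e * (G (line e) (w - x) - G x (w - x)) := by
    simp [line, AffineMap.lineMap_apply]
  rw [hscaled] at he
  rw [slope_def_field, hline0, sub_zero]
  exact div_nonpos_of_nonpos_of_nonneg (nonpos_of_mul_nonpos_right he hpos) (le_of_lt hpos)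

end FrankWolfeGap

section ConvexFDeriv

variable {E : Type*} [NormedAddCommGroup E] [NormedSpace ℝ E] {S : Set E} {f : E → ℝ} {x y : E}

lemma fderiv_sub_le_sub_of_convexOn (hf : ConvexOn ℝ S f) (hdiff : DifferentiableAt ℝ f x)
    (hx : x ∈ S) (hy : y ∈ S) : fderiv ℝ f x (y - x) ≤ f y - f x := by
  have hline : ConvexOn ℝ (Icc (0 : ℝ) 1) (f ∘ AffineMap.lineMap x y) :=
    (hf.comp_affineMap (AffineMap.lineMap x y)).subset
      (fun _ he => hf.1.lineMap_mem hx hy he) (convex_Icc 0 1)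
  have hderiv : HasDerivAt (f ∘ AffineMap.lineMap x y) (fderiv ℝ f x (y - x)) (0 : ℝ) :=
    hdiff.hasFDerivAt.comp_hasDerivAt_of_eq 0 AffineMap.hasDerivAt_lineMap (by simp)
  simpa [slope_def_field] using
    hline.le_slope_of_hasDerivAt (by simp) (by simp) one_pos hderiv

lemma sub_le_fderiv_sub_of_concaveOn (hf : ConcaveOn ℝ S f) (hdiff : DifferentiableAt ℝ f x)
    (hx : x ∈ S) (hy : y ∈ S) : f y - f x ≤ fderiv ℝ f x (y - x) := by
  have h := fderiv_sub_le_sub_of_convexOn hf.neg hdiff.neg hx hy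
  rw [fderiv_neg] at h
  simp only [neg_apply, Pi.neg_apply] at h
  linarith

end ConvexFDeriv

section SaddleField

variable {P Q : Type*} [NormedAddCommGroup P] [NormedSpace ℝ P] [NormedAddCommGroup Q]
  [NormedSpace ℝ Q] {F : P → Q → ℝ} {A : Set P} {B : Set Q}

/-- The covector field `(∇_p F, -∇_μ F)` along which the two players of the zero-sum game with
payoff `F` improve simultaneously. -/
noncomputable def saddleField (F : P → Q → ℝ) (z : P × Q) : P × Q →L[ℝ] ℝ :=
  fderiv ℝ (F · z.2) z.1 ∘L .fst ℝ P Q - fderiv ℝ (F z.1) z.2 ∘L .snd ℝ P Q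

lemma saddleField_apply (z w : P × Q) :
    saddleField F z w = fderiv ℝ (F · z.2) z.1 w.1 - fderiv ℝ (F z.1) z.2 w.2 :=
  rfl

lemma contDiffAt_saddleField {m n : WithTop ℕ∞} {z : P × Q}
    (hF : ContDiffAt ℝ n F.uncurry z) (hmn : m + 1 ≤ n) : ContDiffAt ℝ m (saddleField F) z := by
  have hleft : ContDiffAt ℝ m (fun z : P × Q => fderiv ℝ (F · z.2) z.1) z :=
    ContDiffAt.fderiv (f := fun (z : P × Q) a => F a z.2)
      (ContDiffAt.comp (z, z.1) hF
        (f := fun y : (P × Q) × P => (y.2, y.1.2)) (by fun_prop)) contDiffAt_fst hmn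
  have hright : ContDiffAt ℝ m (fun z : P × Q => fderiv ℝ (F z.1) z.2) z :=
    ContDiffAt.fderiv (f := fun (z : P × Q) b => F z.1 b)
      (ContDiffAt.comp (z, z.2) hF
        (f := fun y : (P × Q) × Q => (y.1.1, y.2)) (by fun_prop)) contDiffAt_snd hmn
  exact (hleft.clm_comp contDiffAt_const).sub (hright.clm_comp contDiffAt_const)

lemma sub_le_saddleField {z w : P × Q} (hz : z ∈ A ×ˢ B) (hw : w ∈ A ×ˢ B)
    (hF : DifferentiableAt ℝ F.uncurry z) (hconc : ConcaveOn ℝ A (F · z.2))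
    (hconv : ConvexOn ℝ B (F z.1)) : F w.1 z.2 - F z.1 w.2 ≤ saddleField F z (w - z) := by
  have hleft : DifferentiableAt ℝ (F · z.2) z.1 :=
    DifferentiableAt.comp (f := fun a => (a, z.2)) z.1 hF (by fun_prop)
  have hright : DifferentiableAt ℝ (F z.1) z.2 :=
    DifferentiableAt.comp (f := fun b => (z.1, b)) z.2 hF (by fun_prop)
  have := sub_le_fderiv_sub_of_concaveOn hconc hleft hz.1 hw.1
  have := fderiv_sub_le_sub_of_convexOn hconv hright hz.2 hw.2
  rw [saddleField_apply, Prod.fst_sub, Prod.snd_sub]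
  linarith

variable (hconc : ∀ b ∈ B, ConcaveOn ℝ A (F · b)) (hconv : ∀ a ∈ A, ConvexOn ℝ B (F a))

include hconc hconv

lemma saddleField_sub_apply_sub_nonpos {z w : P × Q} (hz : z ∈ A ×ˢ B) (hw : w ∈ A ×ˢ B)
    (hFz : DifferentiableAt ℝ F.uncurry z) (hFw : DifferentiableAt ℝ F.uncurry w) :
    (saddleField F w - saddleField F z) (w - z) ≤ 0 := by
  have hzw := sub_le_saddleField hz hw hFz (hconc _ hz.2) (hconv _ hz.1)
  have hwz := sub_le_saddleField hw hz hFw (hconc _ hw.2) (hconv _ hw.1)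
  rw [← neg_sub w z, map_neg] at hwz
  rw [sub_apply]
  linarith

lemma fderiv_saddleField_apply_apply_nonpos {z w : P × Q} (hz : z ∈ A ×ˢ B) (hw : w ∈ A ×ˢ B)
    (hF : ContDiffAt ℝ 2 F.uncurry z) : fderiv ℝ (saddleField F) z (w - z) (w - z) ≤ 0 := by
  have hconvex : Convex ℝ (A ×ˢ B) := (hconc _ hz.2).1.prod (hconv _ hz.1).1
  have hG : DifferentiableAt ℝ (saddleField F) z :=
    (contDiffAt_saddleField (m := 1) hF (by norm_num)).differentiableAt one_ne_zero
  refine fderiv_apply_apply_nonpos_of_eventually hG hconvex hz hw ?_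
  filter_upwards [self_mem_nhdsWithin, nhdsWithin_le_nhds (hF.eventually (by simp))] with y hy hFy
  exact saddleField_sub_apply_sub_nonpos hconc hconv hz hy
    (hF.differentiableAt two_ne_zero) (hFy.differentiableAt two_ne_zero)

end SaddleField

section BestResponse

variable {E : Type*} [NormedAddCommGroup E] [NormedSpace ℝ E] {S : Set E}
  {ℓ : ℝ → E →L[ℝ] ℝ} {z w : ℝ → E}

/-- The best-response (continuous-time Frank–Wolfe) dynamics `ż = w - z` on `[0, ∞)` in `S`, in
integral form, where `w t` maximises the linear payoff `ℓ t` over `S` for almost every `t`.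
Measurability of `w` and continuity of `z` make the integral meaningful when `S` is bounded. -/
structure IsBestResponsePath (S : Set E) (ℓ : ℝ → E →L[ℝ] ℝ) (z w : ℝ → E) : Prop where
  mem : ∀ t ≥ 0, z t ∈ S
  continuousOn : ContinuousOn z (Ici 0)
  aestronglyMeasurable : AEStronglyMeasurable w (volume.restrict (Ici 0))
  isMaxOn : ∀ᵐ t ∂volume.restrict (Ici 0), w t ∈ S ∧ IsMaxOn (ℓ t) S (w t)
  eq_add_integral : ∀ t ≥ 0, z t = z 0 + ∫ s in (0 : ℝ)..t, (w s - z s)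

namespace IsBestResponsePath

lemma ae_norm_sub_le (h : IsBestResponsePath S ℓ z w) (hS : IsBounded S) :
    ∀ᵐ t ∂volume.restrict (Ici 0), ‖w t - z t‖ ≤ (Metric.diam S).toNNReal := by
  filter_upwards [h.isMaxOn, ae_restrict_mem measurableSet_Ici] with t hw ht
  rw [Real.coe_toNNReal _ Metric.diam_nonneg, ← dist_eq_norm]
  exact Metric.dist_le_diam_of_mem hS hw.1 (h.mem t ht)

lemma locallyIntegrableOn (h : IsBestResponsePath S ℓ z w) (hS : IsBounded S) :
    LocallyIntegrableOn (fun t => w t - z t) (Ici 0) :=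
  locallyIntegrableOn_of_ae_norm_le
    (h.aestronglyMeasurable.sub (h.continuousOn.aestronglyMeasurable measurableSet_Ici))
    (h.ae_norm_sub_le hS)

lemma lipschitzOnWith (h : IsBestResponsePath S ℓ z w) (hS : IsBounded S) :
    LipschitzOnWith (Metric.diam S).toNNReal z (Ici 0) :=
  lipschitzOnWith_of_eq_add_integral ordConnected_Ici (h.locallyIntegrableOn hS)
    (h.ae_norm_sub_le hS) self_mem_Ici h.eq_add_integral

lemma ae_hasDerivAt [CompleteSpace E] (h : IsBestResponsePath S ℓ z w) (hS : IsBounded S) :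
    ∀ᵐ t ∂volume.restrict (Ici 0), HasDerivAt z (w t - z t) t :=
  ae_hasDerivAt_of_eq_add_integral (h.locallyIntegrableOn hS) h.eq_add_integral

end IsBestResponsePath

end BestResponse

section SelfPlay

variable {P Q : Type*} [NormedAddCommGroup P] [NormedSpace ℝ P] [CompleteSpace P]
  [NormedAddCommGroup Q] [NormedSpace ℝ Q] [CompleteSpace Q] {F : P → Q → ℝ} {A : Set P}
  {B : Set Q} {p q : ℝ → P} {μ ν : ℝ → Q}

lemma frankWolfeGap_saddleField_le_mul_exp (hA : IsBounded A) (hB : IsBounded B)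
    (hF : ∀ t ≥ 0, ContDiffAt ℝ 2 F.uncurry (p t, μ t))
    (hconc : ∀ b ∈ B, ConcaveOn ℝ A (F · b)) (hconv : ∀ a ∈ A, ConvexOn ℝ B (F a))
    (hp : IsBestResponsePath A (fun t => fderiv ℝ (F · (μ t)) (p t)) p q)
    (hμ : IsBestResponsePath B (fun t => -fderiv ℝ (F (p t)) (μ t)) μ ν) {t : ℝ} (ht : 0 ≤ t) :
    frankWolfeGap (A ×ˢ B) (saddleField F) (p t, μ t) ≤
      frankWolfeGap (A ×ˢ B) (saddleField F) (p 0, μ 0) * Real.exp (-t) := by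
  refine frankWolfeGap_le_mul_exp (z := fun t => (p t, μ t)) (w := fun t => (q t, ν t))
    (hA.prod hB) ((hp.lipschitzOnWith hA).prodMk (hμ.lipschitzOnWith hB))
    (fun t ht => contDiffAt_saddleField (hF t ht) (by norm_num)) ?_ ?_
    (fun t ht _ hw => fderiv_saddleField_apply_apply_nonpos hconc hconv
      ⟨hp.mem t ht, hμ.mem t ht⟩ hw (hF t ht)) ht
  · filter_upwards [hp.ae_hasDerivAt hA, hμ.ae_hasDerivAt hB] with t hpt hμt
    exact hpt.prodMk hμt
  · filter_upwards [hp.isMaxOn, hμ.isMaxOn] with t hqt hνt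
    refine ⟨⟨hqt.1, hνt.1⟩, isMaxOn_iff.2 fun w hw => ?_⟩
    have hqw := isMaxOn_iff.1 hqt.2 _ hw.1
    have hνw := isMaxOn_iff.1 hνt.2 _ hw.2
    simp only [neg_apply] at hνw
    simp only [saddleField_apply]
    linarith

lemma exists_sub_le_mul_exp (hA : IsBounded A) (hB : IsBounded B)
    (hF : ∀ t ≥ 0, ContDiffAt ℝ 2 F.uncurry (p t, μ t))
    (hconc : ∀ b ∈ B, ConcaveOn ℝ A (F · b)) (hconv : ∀ a ∈ A, ConvexOn ℝ B (F a))
    (hp : IsBestResponsePath A (fun t => fderiv ℝ (F · (μ t)) (p t)) p q)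
    (hμ : IsBestResponsePath B (fun t => -fderiv ℝ (F (p t)) (μ t)) μ ν) :
    ∃ M : ℝ, ∀ t ≥ 0, ∀ a ∈ A, ∀ b ∈ B, F a (μ t) - F (p t) b ≤ M * Real.exp (-t) := by
  refine ⟨frankWolfeGap (A ×ˢ B) (saddleField F) (p 0, μ 0), fun t ht a ha b hb => ?_⟩
  have hz : (p t, μ t) ∈ A ×ˢ B := ⟨hp.mem t ht, hμ.mem t ht⟩
  have hw : (a, b) ∈ A ×ˢ B := ⟨ha, hb⟩
  calc F a (μ t) - F (p t) b ≤ saddleField F (p t, μ t) ((a, b) - (p t, μ t)) :=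
        sub_le_saddleField hz hw ((hF t ht).differentiableAt two_ne_zero)
          (hconc _ hz.2) (hconv _ hz.1)
    _ ≤ frankWolfeGap (A ×ˢ B) (saddleField F) (p t, μ t) :=
        apply_sub_le_frankWolfeGap (hA.prod hB) hw
    _ ≤ _ := frankWolfeGap_saddleField_le_mul_exp hA hB hF hconc hconv hp hμ ht

theorem stmt_8_general (hA : IsBounded A) (hB : IsBounded B)
    (hbelow : ∀ a ∈ A, BddBelow (F a '' B))
    (hF : ∀ t ≥ 0, ContDiffAt ℝ 2 F.uncurry (p t, μ t))
    (hconc : ∀ b ∈ B, ConcaveOn ℝ A (F · b)) (hconv : ∀ a ∈ A, ConvexOn ℝ B (F a))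
    (hp : IsBestResponsePath A (fun t => fderiv ℝ (F · (μ t)) (p t)) p q)
    (hμ : IsBestResponsePath B (fun t => -fderiv ℝ (F (p t)) (μ t)) μ ν) :
    Tendsto (fun t => (⨆ a : A, F a (μ t)) - ⨅ b : B, F (p t) b) atTop (𝓝 0) ∧
      Tendsto (fun t => F (p t) (μ t)) atTop (𝓝 (⨆ a : A, ⨅ b : B, F a b)) := by
  obtain ⟨M, hM⟩ := exists_sub_le_mul_exp hA hB hF hconc hconv hp hμ
  let f : A → B → ℝ := fun a b => F a b
  have hfbelow (a : A) : BddBelow (range (f a)) := image_eq_range (F a) B ▸ hbelow a a.2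
  have hbounds : ∀ t ≥ 0,
      0 ≤ (⨆ a : A, F a (μ t)) - ⨅ b : B, F (p t) b ∧
      (⨆ a : A, F a (μ t)) - ⨅ b : B, F (p t) b ≤ M * Real.exp (-t) ∧
      |F (p t) (μ t) - ⨆ a : A, ⨅ b : B, F a b| ≤
        (⨆ a : A, F a (μ t)) - ⨅ b : B, F (p t) b := by
    intro t ht
    let i : A := ⟨p t, hp.mem t ht⟩
    let j : B := ⟨μ t, hμ.mem t ht⟩
    have : Nonempty A := ⟨i⟩
    have : Nonempty B := ⟨j⟩
    have hfabove : BddAbove (range (f · j)) :=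
      ⟨F (p t) (μ t) + M * Real.exp (-t), forall_mem_range.2 fun a =>
        sub_le_iff_le_add'.1 (hM t ht a a.2 _ j.2)⟩
    exact ⟨iSup_sub_iInf_nonneg (f := f) (hfbelow i) hfabove,
      iSup_sub_iInf_le_of_forall_sub_le (f := f) (i := i) (j := j) fun a b => hM t ht a a.2 b b.2,
      abs_sub_iSup_iInf_le (f := f) (i := i) hfbelow hfabove⟩
  have hexp : Tendsto (fun t => M * Real.exp (-t)) atTop (𝓝 0) := by
    simpa using Real.tendsto_exp_neg_atTop_nhds_zero.const_mul M
  have hgap : Tendsto (fun t => (⨆ a : A, F a (μ t)) - ⨅ b : B, F (p t) b) atTop (𝓝 0) := by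
    refine squeeze_zero' ?_ ?_ hexp <;>
      filter_upwards [eventually_ge_atTop 0] with t ht
    exacts [(hbounds t ht).1, (hbounds t ht).2.1]
  refine ⟨hgap, tendsto_iff_dist_tendsto_zero.2 (squeeze_zero' (.of_forall fun _ => dist_nonneg)
    ?_ hgap)⟩
  filter_upwards [eventually_ge_atTop 0] with t ht using (hbounds t ht).2.2

end SelfPlay

lemma fderiv_apply_eq_sum_of_gradient {ι : Type*} [Fintype ι] {f : (ι → ℝ) → ℝ} {x g : ι → ℝ}
    (h : ∃ L : (ι → ℝ) →L[ℝ] ℝ, HasFDerivAt f L x ∧ ∀ w, L w = ∑ i, g i * w i) (w : ι → ℝ) :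
    fderiv ℝ f x w = ∑ i, w i * g i := by
  obtain ⟨L, hL, hLw⟩ := h
  simp only [hL.fderiv, hLw, mul_comm]

/-- Under the hypotheses of the continuous-time Lyapunov theorem (`F` twice
continuously differentiable on an open set `U` containing the trajectory, concave–convex
on `Δ_K × Δ_X`, continuous on `Δ_K × Δ_X`, and the Frank–Wolfe self-play dynamics in
integral form with a.e. best-response selections), the duality gap
`max_{q∈Δ_K} F(q,μ(t)) − min_{ν∈Δ_X} F(p(t),ν)` vanishes as `t → ∞`, and consequently
`F(p(t),μ(t)) → F*`, the saddle-point value `sup_{p∈Δ_K} inf_{μ∈Δ_X} F(p,μ)`. -/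
theorem stmt_8 {K : ℕ} (hK : 0 < K) {X : Type*} [Fintype X] [Nonempty X]
    (F : (Fin K → ℝ) → (X → ℝ) → ℝ)
    (hFcont : ContinuousOn (fun z : (Fin K → ℝ) × (X → ℝ) => F z.1 z.2)
      ((stdSimplex ℝ (Fin K)) ×ˢ (stdSimplex ℝ X)))
    (U : Set ((Fin K → ℝ) × (X → ℝ))) (hU : IsOpen U)
    (hF : ContDiffOn ℝ 2 (fun z : (Fin K → ℝ) × (X → ℝ) => F z.1 z.2) U)
    (hconc : ∀ μ ∈ stdSimplex ℝ X, ConcaveOn ℝ (stdSimplex ℝ (Fin K)) (fun p' => F p' μ))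
    (hconv : ∀ p ∈ stdSimplex ℝ (Fin K), ConvexOn ℝ (stdSimplex ℝ X) (fun μ' => F p μ'))
    (gradp : (Fin K → ℝ) → (X → ℝ) → (Fin K → ℝ))
    (gradm : (Fin K → ℝ) → (X → ℝ) → (X → ℝ))
    (hgradp : ∀ z ∈ U, ∃ L : (Fin K → ℝ) →L[ℝ] ℝ,
      HasFDerivAt (fun p' => F p' z.2) L z.1 ∧ ∀ w, L w = ∑ i, gradp z.1 z.2 i * w i)
    (hgradm : ∀ z ∈ U, ∃ L : (X → ℝ) →L[ℝ] ℝ,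
      HasFDerivAt (fun μ' => F z.1 μ') L z.2 ∧ ∀ w, L w = ∑ x, gradm z.1 z.2 x * w x)
    (p : ℝ → (Fin K → ℝ)) (μ : ℝ → (X → ℝ))
    (q : ℝ → (Fin K → ℝ)) (ν : ℝ → (X → ℝ))
    (hmem : ∀ t ≥ (0 : ℝ), p t ∈ stdSimplex ℝ (Fin K) ∧ μ t ∈ stdSimplex ℝ X ∧
      (p t, μ t) ∈ U)
    (hqmeas : Measurable q) (hνmeas : Measurable ν)
    (hpc : ContinuousOn p (Set.Ici (0 : ℝ))) (hμc : ContinuousOn μ (Set.Ici (0 : ℝ)))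
    (hsel : ∀ᵐ t ∂(volume.restrict (Set.Ici (0 : ℝ))),
      (q t ∈ stdSimplex ℝ (Fin K) ∧ ∀ q' ∈ stdSimplex ℝ (Fin K),
        ∑ i, q' i * gradp (p t) (μ t) i ≤ ∑ i, q t i * gradp (p t) (μ t) i) ∧
      (ν t ∈ stdSimplex ℝ X ∧ ∀ ν' ∈ stdSimplex ℝ X,
        ∑ x, ν t x * gradm (p t) (μ t) x ≤ ∑ x, ν' x * gradm (p t) (μ t) x))
    (hodep : ∀ t ≥ (0 : ℝ), p t = p 0 + ∫ s in (0 : ℝ)..t, (q s - p s))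
    (hodeμ : ∀ t ≥ (0 : ℝ), μ t = μ 0 + ∫ s in (0 : ℝ)..t, (ν s - μ s)) :
    Filter.Tendsto (fun t =>
        (⨆ qq : stdSimplex ℝ (Fin K), F qq.1 (μ t)) -
        (⨅ νν : stdSimplex ℝ X, F (p t) νν.1))
      Filter.atTop (nhds 0) ∧
    Filter.Tendsto (fun t => F (p t) (μ t)) Filter.atTop
      (nhds (⨆ pp : stdSimplex ℝ (Fin K), ⨅ mm : stdSimplex ℝ X, F pp.1 mm.1)) := by
  have hA := isCompact_stdSimplex ℝ (Fin K)
  have hB := isCompact_stdSimplex ℝ X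
  have hbelow : ∀ a ∈ stdSimplex ℝ (Fin K), BddBelow (F a '' stdSimplex ℝ X) := fun a ha =>
    (hB.image_of_continuousOn <| hFcont.comp (f := fun b => (a, b)) (by fun_prop)
      fun _ hb => ⟨ha, hb⟩).bddBelow
  refine stmt_8_general hA.isBounded hB.isBounded hbelow
    (fun t ht => hF.contDiffAt (hU.mem_nhds (hmem t ht).2.2)) hconc hconv
    ⟨fun t ht => (hmem t ht).1, hpc, hqmeas.aestronglyMeasurable, ?_, hodep⟩
    ⟨fun t ht => (hmem t ht).2.1, hμc, hνmeas.aestronglyMeasurable, ?_, hodeμ⟩ <;>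
  filter_upwards [hsel, ae_restrict_mem measurableSet_Ici] with t ht ht0
  · have hgrad := fderiv_apply_eq_sum_of_gradient (hgradp _ (hmem t ht0).2.2)
    exact ⟨ht.1.1, isMaxOn_iff.2 fun a ha => by simpa only [hgrad] using ht.1.2 a ha⟩
  · have hgrad := fderiv_apply_eq_sum_of_gradient (hgradm _ (hmem t ht0).2.2)
    exact ⟨ht.2.1, isMaxOn_iff.2 fun b hb => by
      simpa only [neg_apply, hgrad, neg_le_neg_iff] using ht.2.2 b hb⟩
end

section
/- Consider Gaussian BAI and define F(p,μ) = Σ_{x∈X} μ_x D(p,x). For (p,μ) ∈ Δ_K × Δ_X let C(p,μ) = conv{ f : there exist p_n ∈ int Δ_K with p_n → p and ∇_p F(p_n,μ) → f }, LMO_p(p,μ) = conv{ e_i : there exists f ∈ C(p,μ) with f_i = max_j f_j }, and LMO_μ(p,μ) = conv{ e_x : D(p,x) = min_{x'∈X} D(p,x') }, where e_i denotes the i-th standard basis vector. Set κ_min = min_{x∈X} (θ_{I*}−θ_x)²/(8σ²), M = max_{x∈X} (θ_{I*}−θ_x)²/(2σ²), ε₀ = min{1/2, κ_min/(4KM)},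 and T* = (K−1)(log(1/ε₀) + log 2). Then every absolutely continuous solution (p(·),μ(·)) : [0,∞) → Δ_K × Δ_X satisfying, for almost every t, ṗ(t) = q(t) − p(t) with q(t) ∈ LMO_p(p(t),μ(t)) and μ̇(t) = ν(t) − μ(t) with ν(t) ∈ LMO_μ(p(t),μ(t)), started from any (p(0),μ(0)) ∈ Δ_K × Δ_X, satisfies p(t) ∈ int Δ_K (all coordinates strictly positive) for every t > T*. -/
open Filter MeasureTheory

noncomputable section

/-- The relative interior of the standard simplex. -/
def simplexInterior (K : ℕ) : Set (Fin K → ℝ) :=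
  {p | p ∈ stdSimplex ℝ (Fin K) ∧ ∀ i, 0 < p i}

/-- Gaussian best-arm-identification payoff. -/
def Dg {K : ℕ} (θ : Fin K → ℝ) (σ : ℝ) (Istar : Fin K)
    (p : Fin K → ℝ) (x : Fin K) : ℝ :=
  if 0 < p Istar + p x then
    ((θ Istar - θ x) ^ 2 / (2 * σ ^ 2)) * (p Istar * p x / (p Istar + p x))
  else 0

/-- The mixed payoff `F(p,μ) = ∑_{x∈X} μ_x D(p,x)` over scenarios `X = [K] \ {I*}`. -/
def Fg {K : ℕ} (θ : Fin K → ℝ) (σ : ℝ) (Istar : Fin K)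
    (p : Fin K → ℝ) (μ : {x : Fin K // x ≠ Istar} → ℝ) : ℝ :=
  ∑ x : {x : Fin K // x ≠ Istar}, μ x * Dg θ σ Istar p x.1

/-- Gradient of `F` in `p`, obtained from the Fréchet derivative. -/
def gradFg {K : ℕ} (θ : Fin K → ℝ) (σ : ℝ) (Istar : Fin K)
    (p : Fin K → ℝ) (μ : {x : Fin K // x ≠ Istar} → ℝ) : Fin K → ℝ :=
  fun i => fderiv ℝ (fun p' => Fg θ σ Istar p' μ) p (Pi.single i 1)

/-- `C(p,μ)`: convex hull of limits of gradients `∇_p F(p_n, μ)` along interior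
sequences `p_n → p`. -/
def Cg {K : ℕ} (θ : Fin K → ℝ) (σ : ℝ) (Istar : Fin K)
    (p : Fin K → ℝ) (μ : {x : Fin K // x ≠ Istar} → ℝ) : Set (Fin K → ℝ) :=
  convexHull ℝ {f : Fin K → ℝ | ∃ pn : ℕ → (Fin K → ℝ),
    (∀ n, pn n ∈ simplexInterior K) ∧
    Tendsto pn atTop (nhds p) ∧
    Tendsto (fun n => gradFg θ σ Istar (pn n) μ) atTop (nhds f)}

/-- `LMO_p(p,μ) = conv{ e_i : ∃ f ∈ C(p,μ), f_i = max_j f_j }`. -/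
def LMOpg {K : ℕ} (θ : Fin K → ℝ) (σ : ℝ) (Istar : Fin K)
    (p : Fin K → ℝ) (μ : {x : Fin K // x ≠ Istar} → ℝ) : Set (Fin K → ℝ) :=
  convexHull ℝ {e : Fin K → ℝ | ∃ i : Fin K, e = Pi.single i 1 ∧
    ∃ f ∈ Cg θ σ Istar p μ, ∀ j, f j ≤ f i}

/-- `LMO_μ(p,μ) = conv{ e_x : D(p,x) = min_{x'} D(p,x') }`. -/
def LMOmug {K : ℕ} (θ : Fin K → ℝ) (σ : ℝ) (Istar : Fin K)
    (p : Fin K → ℝ) : Set ({x : Fin K // x ≠ Istar} → ℝ) :=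
  convexHull ℝ {e : {x : Fin K // x ≠ Istar} → ℝ | ∃ x : {x : Fin K // x ≠ Istar},
    e = Pi.single x 1 ∧ ∀ x' : {x : Fin K // x ≠ Istar},
      Dg θ σ Istar p x.1 ≤ Dg θ σ Istar p x'.1}

/-!
Variation of constants for `ẋ = u - x` gives `e^b x(b) = e^a x(a) + ∫_a^b e^s u(s) ds`. Hence a
positive coordinate stays positive, the mass of coordinates avoided by the control decays
exponentially, and a control charging only vanishing coordinates makes one of them positive.

If the leader's coordinate vanishes, the gradient of `F(·, μ)` vanishes at every played arm while
its total mass is bounded below, so the best response charges only unplayed arms; the leader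
therefore becomes positive at once. From then on, as long as some arm is unplayed, `D(p, ·)` is
minimal exactly at the unplayed arms. So `μ` concentrates on them within time `log (1 / ε)`, after
which their gradients dominate, the best response `q` charges only unplayed arms, and a new arm is
played. At most `K - 1` such rounds are needed.
-/

section RelaxationFlow

variable {E F : Type*} [NormedAddCommGroup E] [NormedSpace ℝ E] [NormedAddCommGroup F]
  [NormedSpace ℝ F]

/-- `x` solves `ẋ = u - x` on `[0, ∞)` in integral form, for a locally integrable control `u`. -/
structure IsRelaxationFlow (x u : ℝ → E) : Prop where
  intervalIntegrable_control : ∀ t ≥ 0, IntervalIntegrable u volume 0 t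
  continuousOn : ContinuousOn x (Set.Ici 0)
  eq_add_integral : ∀ t ≥ 0, x t = x 0 + ∫ s in (0 : ℝ)..t, (u s - x s)

namespace IsRelaxationFlow

variable {a b : ℝ}

lemma continuousOn_uIcc {x u : ℝ → E} (h : IsRelaxationFlow x u) (ha : 0 ≤ a) (hb : 0 ≤ b) :
    ContinuousOn x (Set.uIcc a b) :=
  h.continuousOn.mono fun _ hs => (le_min ha hb).trans hs.1

lemma intervalIntegrable_velocity {x u : ℝ → E} (h : IsRelaxationFlow x u) (ha : 0 ≤ a)
    (hb : 0 ≤ b) : IntervalIntegrable (fun s => u s - x s) volume a b :=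
  ((h.intervalIntegrable_control a ha).symm.trans (h.intervalIntegrable_control b hb)).sub
    (h.continuousOn_uIcc ha hb).intervalIntegrable

lemma eq_add_integral_of_nonneg {x u : ℝ → E} (h : IsRelaxationFlow x u) (ha : 0 ≤ a)
    (hb : 0 ≤ b) : x b = x a + ∫ s in a..b, (u s - x s) := by
  rw [h.eq_add_integral b hb, h.eq_add_integral a ha, add_assoc,
    intervalIntegral.integral_add_adjacent_intervals (h.intervalIntegrable_velocity le_rfl ha)
      (h.intervalIntegrable_velocity ha hb)]

lemma clm_comp [CompleteSpace E] [CompleteSpace F] {x u : ℝ → E} (h : IsRelaxationFlow x u)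
    (L : E →L[ℝ] F) : IsRelaxationFlow (fun t => L (x t)) (fun t => L (u t)) where
  intervalIntegrable_control t ht :=
    ⟨L.integrable_comp (h.intervalIntegrable_control t ht).1,
      L.integrable_comp (h.intervalIntegrable_control t ht).2⟩
  continuousOn := L.continuous.comp_continuousOn h.continuousOn
  eq_add_integral t ht := by
    simp only [← map_sub]
    rw [L.intervalIntegral_comp_comm (h.intervalIntegrable_velocity le_rfl ht), ← map_add,
      ← h.eq_add_integral t ht]

theorem exp_mul_eq_add_integral {x u : ℝ → ℝ} (h : IsRelaxationFlow x u) (ha : 0 ≤ a)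
    (hb : 0 ≤ b) :
    Real.exp b * x b = Real.exp a * x a + ∫ s in a..b, Real.exp s * u s := by
  have hv := h.intervalIntegrable_velocity ha hb
  set y : ℝ → ℝ := fun t => x a + ∫ s in a..t, (u s - x s)
  have hyx : ∀ t, 0 ≤ t → y t = x t := fun t ht => (h.eq_add_integral_of_nonneg ha ht).symm
  have hexp_ac : AbsolutelyContinuousOnInterval Real.exp a b :=
    Real.contDiff_exp.contDiffOn.absolutelyContinuousOnInterval
  have hy_ac : AbsolutelyContinuousOnInterval y a b :=
    (contDiff_const.contDiffOn.absolutelyContinuousOnInterval).add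
      (hv.absolutelyContinuousOnInterval_intervalIntegral Set.left_mem_uIcc)
  have hparts := hexp_ac.integral_deriv_mul_eq_sub hy_ac
  rw [hyx b hb, hyx a ha] at hparts
  rw [← sub_eq_iff_eq_add', ← hparts]
  refine intervalIntegral.integral_congr_ae ?_
  filter_upwards [hv.ae_hasDerivAt_integral] with s hs hsab
  have hsI := Set.uIoc_subset_uIcc hsab
  have hderiv : deriv y s = u s - x s :=
    ((hs hsI a Set.left_mem_uIcc).const_add (x a)).deriv
  rw [hderiv, Real.deriv_exp, hyx s ((le_min ha hb).trans hsI.1)]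
  ring

end IsRelaxationFlow

end RelaxationFlow

section SimplexFlow

variable {ι : Type*} [Fintype ι]

/-- The set of vanishing coordinates of `x`; on the simplex it is the complement of the face
carrying `x`. -/
def zeros (x : ι → ℝ) : Finset ι := {i | x i = 0}

@[simp]
lemma mem_zeros {x : ι → ℝ} {i : ι} : i ∈ zeros x ↔ x i = 0 := by
  simp [zeros]

/-- A solution of `ẋ = u - x` on `[0, ∞)` for which both the state and the control range in the
standard simplex. -/
structure IsSimplexFlow (x u : ℝ → ι → ℝ) : Prop extends IsRelaxationFlow x u where
  mem_stdSimplex : ∀ t ≥ 0, x t ∈ stdSimplex ℝ ι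
  control_mem_stdSimplex : ∀ᵐ t, 0 ≤ t → u t ∈ stdSimplex ℝ ι

namespace IsSimplexFlow

variable {x u : ℝ → ι → ℝ} {a b : ℝ}

lemma of_measurable (hu : Measurable u) (hx : ContinuousOn x (Set.Ici 0))
    (hxu : ∀ t ≥ 0, x t = x 0 + ∫ s in (0 : ℝ)..t, (u s - x s))
    (hx_mem : ∀ t ≥ 0, x t ∈ stdSimplex ℝ ι) (hu_mem : ∀ᵐ t, 0 ≤ t → u t ∈ stdSimplex ℝ ι) :
    IsSimplexFlow x u where
  intervalIntegrable_control t ht := by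
    rw [intervalIntegrable_iff_integrableOn_Ioc_of_le ht]
    refine Measure.integrableOn_of_bounded (M := 1) (by simp) hu.aestronglyMeasurable ?_
    rw [ae_restrict_iff' measurableSet_Ioc]
    filter_upwards [hu_mem] with s hs hst
    exact mem_closedBall_zero_iff.1 (stdSimplex_subset_closedBall (hs hst.1.le))
  continuousOn := hx
  eq_add_integral := hxu
  mem_stdSimplex := hx_mem
  control_mem_stdSimplex := hu_mem

theorem exp_mul_sum_eq_add_integral (h : IsSimplexFlow x u) (A : Finset ι) (ha : 0 ≤ a)
    (hb : 0 ≤ b) :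
    Real.exp b * ∑ i ∈ A, x b i =
      Real.exp a * ∑ i ∈ A, x a i + ∫ s in a..b, Real.exp s * ∑ i ∈ A, u s i := by
  simpa [sum_apply] using
    (h.clm_comp (∑ i ∈ A, ContinuousLinearMap.proj (R := ℝ) i)).exp_mul_eq_add_integral ha hb

lemma pos_of_pos (h : IsSimplexFlow x u) (ha : 0 ≤ a) (hab : a ≤ b) {i : ι} (hi : 0 < x a i) :
    0 < x b i := by
  have hexp := h.exp_mul_sum_eq_add_integral {i} ha (ha.trans hab)
  have hint : 0 ≤ ∫ s in a..b, Real.exp s * u s i := by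
    refine intervalIntegral.integral_nonneg_of_ae_restrict hab ?_
    rw [EventuallyLE, ae_restrict_iff' measurableSet_Icc]
    filter_upwards [h.control_mem_stdSimplex] with s hs hsab
    exact mul_nonneg (Real.exp_pos s).le ((hs (ha.trans hsab.1)).1 i)
  simp only [Finset.sum_singleton] at hexp
  have hpos : 0 < Real.exp b * x b i := by rw [hexp]; positivity
  exact pos_of_mul_pos_right hpos (Real.exp_pos b).le

lemma zeros_antitoneOn (h : IsSimplexFlow x u) :
    AntitoneOn (fun t => zeros (x t)) (Set.Ici 0) := by
  intro a ha b _ hab i hi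
  rw [mem_zeros] at hi ⊢
  by_contra hne
  exact (h.pos_of_pos ha hab (((h.mem_stdSimplex a ha).1 i).lt_of_ne' hne)).ne' hi

lemma sum_le_exp_sub (h : IsSimplexFlow x u) (A : Finset ι) (ha : 0 ≤ a) (hab : a ≤ b)
    (hu : ∀ᵐ s, s ∈ Set.Icc a b → ∀ i ∈ A, u s i = 0) :
    ∑ i ∈ A, x b i ≤ Real.exp (a - b) := by
  have hexp := h.exp_mul_sum_eq_add_integral A ha (ha.trans hab)
  have hint : ∫ s in a..b, Real.exp s * ∑ i ∈ A, u s i = 0 := by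
    refine intervalIntegral.integral_zero_ae ?_
    filter_upwards [hu] with s hs hsab
    rw [Set.uIoc_of_le hab] at hsab
    rw [Finset.sum_eq_zero (hs (Set.Ioc_subset_Icc_self hsab)), mul_zero]
  have hle : ∑ i ∈ A, x a i ≤ 1 := by
    rw [← (h.mem_stdSimplex a ha).2]
    exact Finset.sum_le_univ_sum_of_nonneg (h.mem_stdSimplex a ha).1
  rw [Real.exp_sub, le_div_iff₀' (Real.exp_pos b), hexp, hint, add_zero]
  exact mul_le_of_le_one_right (Real.exp_pos a).le hle

lemma sum_pos_of_control_supported (h : IsSimplexFlow x u) (A : Finset ι) (ha : 0 ≤ a)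
    (hab : a < b) (hu : ∀ᵐ s, s ∈ Set.Icc a b → ∀ i, u s i ≠ 0 → i ∈ A) :
    0 < ∑ i ∈ A, x b i := by
  have hexp := h.exp_mul_sum_eq_add_integral A ha (ha.trans hab.le)
  have hint : ∫ s in a..b, Real.exp s * ∑ i ∈ A, u s i = Real.exp b - Real.exp a := by
    rw [← integral_exp]
    refine intervalIntegral.integral_congr_ae ?_
    filter_upwards [hu, h.control_mem_stdSimplex] with s hs hs_mem hsab
    rw [Set.uIoc_of_le hab.le] at hsab
    have hsum : ∑ i ∈ A, u s i = 1 := by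
      rw [← (hs_mem (ha.trans hsab.1.le)).2]
      exact Finset.sum_subset A.subset_univ fun i _ hi =>
        not_not.1 (mt (hs (Set.Ioc_subset_Icc_self hsab) i) hi)
    rw [hsum, mul_one]
  have hnonneg : 0 ≤ ∑ i ∈ A, x a i :=
    Finset.sum_nonneg fun i _ => (h.mem_stdSimplex a ha).1 i
  have hpos : 0 < Real.exp b * ∑ i ∈ A, x b i := by
    rw [hexp, hint]
    exact add_pos_of_nonneg_of_pos (by positivity) (sub_pos.2 (Real.exp_lt_exp.2 hab))
  exact pos_of_mul_pos_right hpos (Real.exp_pos b).le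

theorem zeros_ssubset (h : IsSimplexFlow x u) (ha : 0 ≤ a) (hab : a < b)
    (hu : ∀ᵐ s, s ∈ Set.Icc a b → ∀ i, u s i ≠ 0 → x s i = 0) :
    zeros (x b) ⊂ zeros (x a) := by
  have hb : 0 ≤ b := ha.trans hab.le
  refine (h.zeros_antitoneOn ha hb hab.le).ssubset_of_ne fun heq => ?_
  refine (h.sum_pos_of_control_supported (zeros (x b)) ha hab ?_).ne'
    (Finset.sum_eq_zero fun i hi => mem_zeros.1 hi)
  filter_upwards [hu] with s hs hsab i hi
  rw [show zeros (x b) = zeros (x a) from heq]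
  exact h.zeros_antitoneOn ha (ha.trans hsab.1) hsab.1 (mem_zeros.2 (hs hsab i hi))

end IsSimplexFlow

end SimplexFlow


lemma mem_stdSimplex_and_of_mem_convexHull_single {ι : Type*} [Fintype ι] [DecidableEq ι]
    {P : ι → Prop} {q : ι → ℝ} (hq : q ∈ convexHull ℝ {e | ∃ i, e = Pi.single i 1 ∧ P i}) :
    q ∈ stdSimplex ℝ ι ∧ ∀ i, q i ≠ 0 → P i := by
  have hconv : Convex ℝ (stdSimplex ℝ ι ∩ {q | ∀ i, ¬P i → q i = 0}) := by
    refine (convex_stdSimplex ℝ ι).inter fun x hx y hy a b _ _ _ i hi => ?_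
    simp [hx i hi, hy i hi]
  have hmem : q ∈ stdSimplex ℝ ι ∩ {q | ∀ i, ¬P i → q i = 0} := by
    refine convexHull_min ?_ hconv hq
    rintro _ ⟨i, rfl, hi⟩
    exact ⟨single_mem_stdSimplex ℝ i,
      fun j hj => Pi.single_eq_of_ne (fun hji => hj (by rwa [hji])) 1⟩
  exact ⟨hmem.1, fun i hi => not_not.1 (mt (hmem.2 i) hi)⟩

lemma hasFDerivAt_mul_div_add {ι : Type*} [Finite ι] (i j : ι) {p : ι → ℝ}
    (h : p i + p j ≠ 0) :
    HasFDerivAt (fun p : ι → ℝ => p i * p j / (p i + p j))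
      ((p j / (p i + p j)) ^ 2 • ContinuousLinearMap.proj (R := ℝ) (φ := fun _ => ℝ) i +
        (p i / (p i + p j)) ^ 2 • ContinuousLinearMap.proj (R := ℝ) (φ := fun _ => ℝ) j) p := by
  have := Fintype.ofFinite ι
  have hi := hasFDerivAt_apply (𝕜 := ℝ) i p
  have hj := hasFDerivAt_apply (𝕜 := ℝ) j p
  simp only [div_eq_mul_inv]
  refine ((hi.fun_mul hj).fun_mul
    ((hasDerivAt_inv h).comp_hasFDerivAt p (hi.fun_add hj))).congr_fderiv ?_
  ext v
  simp only [smul_add, neg_smul, smul_neg, Function.comp_apply, add_apply, neg_apply, smul_apply,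
    ContinuousLinearMap.proj_apply, smul_eq_mul]
  field_simp
  ring

section Payoff

/-- The scenario set `X = {1, …, K} \ {I*}`. -/
abbrev Scenario {K : ℕ} (Istar : Fin K) : Type := {x : Fin K // x ≠ Istar}

/-- The coefficient `(θ_{I*} - θ_x)² / (2σ²)` of the payoff `D(p, x)`. -/
def gapWeight {K : ℕ} (θ : Fin K → ℝ) (σ : ℝ) (Istar x : Fin K) : ℝ :=
  (θ Istar - θ x) ^ 2 / (2 * σ ^ 2)

variable {K : ℕ} {θ : Fin K → ℝ} {σ : ℝ} {Istar : Fin K} {p : Fin K → ℝ}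
  {μ : Scenario Istar → ℝ}

lemma gapWeight_nonneg {x : Fin K} : 0 ≤ gapWeight θ σ Istar x := by
  unfold gapWeight
  positivity

lemma gapWeight_pos {x : Fin K} (hx : θ x ≠ θ Istar) (hσ : σ ≠ 0) :
    0 < gapWeight θ σ Istar x := by
  have := sub_ne_zero.2 hx.symm
  unfold gapWeight
  positivity

lemma Dg_eq_zero_of_apply_eq_zero {x : Fin K} (hx : p x = 0) : Dg θ σ Istar p x = 0 := by
  simp [Dg, hx]

lemma Dg_pos {x : Fin K} (hw : 0 < gapWeight θ σ Istar x) (hI : 0 < p Istar) (hx : 0 < p x) :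
    0 < Dg θ σ Istar p x := by
  rw [Dg, if_pos (add_pos hI hx)]
  exact mul_pos hw (by positivity)

lemma hasFDerivAt_Dg {x : Fin K} (h : 0 < p Istar + p x) :
    HasFDerivAt (fun p => Dg θ σ Istar p x)
      (gapWeight θ σ Istar x •
        ((p x / (p Istar + p x)) ^ 2 •
            ContinuousLinearMap.proj (R := ℝ) (φ := fun _ => ℝ) Istar +
          (p Istar / (p Istar + p x)) ^ 2 •
            ContinuousLinearMap.proj (R := ℝ) (φ := fun _ => ℝ) x)) p := by
  refine ((hasFDerivAt_mul_div_add Istar x h.ne').const_mul _).congr_of_eventuallyEq ?_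
  have hnear : ∀ᶠ p' : Fin K → ℝ in nhds p, 0 < p' Istar + p' x :=
    continuousAt_const.eventually_lt (by fun_prop) h
  filter_upwards [hnear] with p' hp'
  exact if_pos hp'

lemma gradFg_apply (hp : ∀ i, 0 < p i) (i : Fin K) :
    gradFg θ σ Istar p μ i = ∑ x : Scenario Istar, μ x * (gapWeight θ σ Istar x *
      ((p x / (p Istar + p x)) ^ 2 * (Pi.single i 1 : Fin K → ℝ) Istar +
        (p Istar / (p Istar + p x)) ^ 2 * (Pi.single i 1 : Fin K → ℝ) x)) := by
  have hF := HasFDerivAt.fun_sum (u := Finset.univ) fun (x : Scenario Istar) _ =>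
    (hasFDerivAt_Dg (θ := θ) (σ := σ) (add_pos (hp Istar) (hp x))).const_mul (μ x)
  change fderiv ℝ (fun p' => ∑ x : Scenario Istar, μ x * Dg θ σ Istar p' x) p _ = _
  rw [hF.fderiv]
  simp [sum_apply, mul_add]

lemma gradFg_apply_scenario (hp : ∀ i, 0 < p i) (x : Scenario Istar) :
    gradFg θ σ Istar p μ x =
      μ x * (gapWeight θ σ Istar x * (p Istar / (p Istar + p x)) ^ 2) := by
  rw [gradFg_apply hp, Finset.sum_eq_single x]
  · simp [x.2.symm]
  · intro y _ hyx
    simp [x.2.symm, Subtype.coe_ne_coe.2 hyx]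
  · simp

lemma gradFg_apply_leader (hp : ∀ i, 0 < p i) :
    gradFg θ σ Istar p μ Istar =
      ∑ x : Scenario Istar, μ x * (gapWeight θ σ Istar x * (p x / (p Istar + p x)) ^ 2) := by
  rw [gradFg_apply hp]
  exact Finset.sum_congr rfl fun x _ => by simp [x.2]

lemma sum_gradFg (hp : ∀ i, 0 < p i) :
    ∑ i, gradFg θ σ Istar p μ i = ∑ x : Scenario Istar, μ x * (gapWeight θ σ Istar x *
      ((p x / (p Istar + p x)) ^ 2 + (p Istar / (p Istar + p x)) ^ 2)) := by
  simp only [gradFg_apply hp]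
  rw [Finset.sum_comm]
  refine Finset.sum_congr rfl fun x _ => ?_
  simp only [← Finset.mul_sum, Finset.sum_add_distrib, Finset.sum_pi_single, Finset.mem_univ,
    if_true, mul_one]

lemma one_half_le_sq_div_add_sq_div {a b : ℝ} (h : a + b ≠ 0) :
    1 / 2 ≤ (b / (a + b)) ^ 2 + (a / (a + b)) ^ 2 := by
  have hsum : b / (a + b) + a / (a + b) = 1 := by field_simp; ring
  nlinarith [sq_nonneg (b / (a + b) - a / (a + b))]

end Payoff

section LimitGradients

variable {K : ℕ} {θ : Fin K → ℝ} {σ : ℝ} {Istar : Fin K} {p : Fin K → ℝ}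
  {μ : Scenario Istar → ℝ} {f : Fin K → ℝ}

lemma clm_le_of_mem_Cg (φ : (Fin K → ℝ) →L[ℝ] ℝ) {g : (Fin K → ℝ) → ℝ} (hg : ContinuousAt g p)
    (hle : ∀ p' ∈ simplexInterior K, φ (gradFg θ σ Istar p' μ) ≤ g p')
    (hf : f ∈ Cg θ σ Istar p μ) : φ f ≤ g p := by
  refine convexHull_min ?_ (convex_halfSpace_le φ.isLinear (g p)) hf
  rintro f' ⟨pn, hpn, hpn_tendsto, hgrad⟩
  exact le_of_tendsto_of_tendsto' ((φ.continuous.tendsto f').comp hgrad)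
    (hg.tendsto.comp hpn_tendsto) fun n => hle (pn n) (hpn n)

lemma clm_eq_of_mem_Cg (φ : (Fin K → ℝ) →L[ℝ] ℝ) {g : (Fin K → ℝ) → ℝ} (hg : ContinuousAt g p)
    (heq : ∀ p' ∈ simplexInterior K, φ (gradFg θ σ Istar p' μ) = g p')
    (hf : f ∈ Cg θ σ Istar p μ) : φ f = g p := by
  refine (clm_le_of_mem_Cg φ hg (fun p' hp' => (heq p' hp').le) hf).antisymm ?_
  exact neg_le_neg_iff.1
    (clm_le_of_mem_Cg (-φ) hg.neg (fun p' hp' => (congrArg Neg.neg (heq p' hp')).le) hf)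

lemma apply_scenario_of_mem_Cg (hf : f ∈ Cg θ σ Istar p μ) {x : Scenario Istar}
    (hx : p Istar + p x ≠ 0) :
    f x = μ x * (gapWeight θ σ Istar x * (p Istar / (p Istar + p x)) ^ 2) :=
  clm_eq_of_mem_Cg (ContinuousLinearMap.proj x.1)
    (g := fun p => μ x * (gapWeight θ σ Istar x * (p Istar / (p Istar + p x)) ^ 2))
    (by fun_prop (disch := assumption)) (fun _ hp' => gradFg_apply_scenario hp'.2 x) hf

lemma apply_leader_of_mem_Cg (hf : f ∈ Cg θ σ Istar p μ)
    (hp : ∀ x : Scenario Istar, p Istar + p x ≠ 0) :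
    f Istar =
      ∑ x : Scenario Istar, μ x * (gapWeight θ σ Istar x * (p x / (p Istar + p x)) ^ 2) :=
  clm_eq_of_mem_Cg (ContinuousLinearMap.proj Istar)
    (g := fun p => ∑ x : Scenario Istar,
      μ x * (gapWeight θ σ Istar x * (p x / (p Istar + p x)) ^ 2))
    (by fun_prop (disch := exact hp _)) (fun _ hp' => gradFg_apply_leader hp'.2) hf

lemma sum_mul_gapWeight_div_two_le_of_mem_Cg (hμ : ∀ x, 0 ≤ μ x)
    (hf : f ∈ Cg θ σ Istar p μ) :
    (∑ x : Scenario Istar, μ x * gapWeight θ σ Istar x) / 2 ≤ ∑ i, f i := by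
  have hle := clm_le_of_mem_Cg (-∑ i, ContinuousLinearMap.proj (R := ℝ) i)
    (g := fun _ => -((∑ x : Scenario Istar, μ x * gapWeight θ σ Istar x) / 2))
    continuousAt_const ?_ hf
  · simpa [sum_apply] using hle
  · intro p' hp'
    simp only [neg_apply, sum_apply, ContinuousLinearMap.proj_apply, neg_le_neg_iff]
    rw [sum_gradFg hp'.2, Finset.sum_div]
    refine Finset.sum_le_sum fun x _ => ?_
    rw [mul_div_assoc, div_eq_mul_one_div (gapWeight θ σ Istar x)]
    exact mul_le_mul_of_nonneg_left (mul_le_mul_of_nonneg_left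
      (one_half_le_sq_div_add_sq_div (add_pos (hp'.2 _) (hp'.2 _)).ne') gapWeight_nonneg) (hμ x)

end LimitGradients

section BestResponses

variable {K : ℕ} {θ : Fin K → ℝ} {σ : ℝ} {Istar : Fin K} {p q : Fin K → ℝ}
  {μ ν : Scenario Istar → ℝ}

lemma apply_eq_zero_of_mem_LMOmug {x : Scenario Istar} (hw : 0 < gapWeight θ σ Istar x)
    (hp : ∀ i, 0 ≤ p i) (hI : 0 < p Istar) (hzero : ∃ i, p i = 0)
    (hν : ν ∈ LMOmug θ σ Istar p) (hνx : ν x ≠ 0) : p x = 0 := by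
  obtain ⟨i, hi⟩ := hzero
  have hiI : i ≠ Istar := fun h => hI.ne' (h ▸ hi)
  have hmin := (mem_stdSimplex_and_of_mem_convexHull_single hν).2 x hνx ⟨i, hiI⟩
  rw [Dg_eq_zero_of_apply_eq_zero hi] at hmin
  by_contra hx
  exact (Dg_pos hw hI ((hp x).lt_of_ne' hx)).not_ge hmin

lemma apply_eq_zero_of_mem_LMOpg_of_leader_eq_zero
    (hw : ∀ x : Scenario Istar, 0 < gapWeight θ σ Istar x)
    (hμ : μ ∈ stdSimplex ℝ (Scenario Istar)) (hI : p Istar = 0)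
    (hq : q ∈ LMOpg θ σ Istar p μ) {i : Fin K} (hqi : q i ≠ 0) : p i = 0 := by
  obtain ⟨f, hf, hmax⟩ := (mem_stdSimplex_and_of_mem_convexHull_single hq).2 i hqi
  by_contra hi
  have hiI : i ≠ Istar := fun h => hi (h ▸ hI)
  have hfi : f i = 0 := by
    simpa [hI] using apply_scenario_of_mem_Cg hf (x := ⟨i, hiI⟩) (by simpa [hI] using hi)
  have hle := (sum_mul_gapWeight_div_two_le_of_mem_Cg hμ.1 hf).trans
    (Finset.sum_nonpos fun j _ => (hmax j).trans hfi.le)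
  obtain ⟨x, -, hx⟩ : ∃ x ∈ Finset.univ, 0 < μ x :=
    Finset.exists_lt_of_sum_lt (f := fun _ => 0) (by simp [hμ.2])
  have hpos : 0 < ∑ x : Scenario Istar, μ x * gapWeight θ σ Istar x :=
    Finset.sum_pos' (fun y _ => mul_nonneg (hμ.1 y) (hw y).le)
      ⟨x, Finset.mem_univ x, mul_pos hx (hw x)⟩
  linarith

lemma apply_le_mul_sum_of_mem_Cg {M : ℝ} (hM : ∀ x : Scenario Istar, gapWeight θ σ Istar x ≤ M)
    (hμ : ∀ x, 0 ≤ μ x) (hp : ∀ i, 0 ≤ p i) (hI : 0 < p Istar) {f : Fin K → ℝ}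
    (hf : f ∈ Cg θ σ Istar p μ) {i : Fin K} (hi : p i ≠ 0) :
    f i ≤ M * ∑ x : Scenario Istar with p x.1 ≠ 0, μ x := by
  have hs : ∀ x : Scenario Istar, 0 < p Istar + p x := fun x => add_pos_of_pos_of_nonneg hI (hp x)
  have hterm : ∀ (x : Scenario Istar) {r : ℝ}, 0 ≤ r → r ≤ 1 →
      μ x * (gapWeight θ σ Istar x * r ^ 2) ≤ M * μ x := by
    intro x r hr₀ hr₁
    rw [mul_comm M]
    exact mul_le_mul_of_nonneg_left
      ((mul_le_of_le_one_right gapWeight_nonneg (pow_le_one₀ hr₀ hr₁)).trans (hM x)) (hμ x)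
  rw [Finset.mul_sum]
  by_cases hiI : i = Istar
  · rw [hiI, apply_leader_of_mem_Cg hf fun x => (hs x).ne', Finset.sum_filter]
    refine Finset.sum_le_sum fun x _ => ?_
    split_ifs with hx
    · exact hterm x (div_nonneg (hp x) (hs x).le)
        (div_le_one_of_le₀ (le_add_of_nonneg_left hI.le) (hs x).le)
    · simp [not_not.1 hx]
  · have hM₀ : 0 ≤ M := gapWeight_nonneg.trans (hM ⟨i, hiI⟩)
    have hfi := apply_scenario_of_mem_Cg hf (x := ⟨i, hiI⟩) (hs _).ne'
    calc f i ≤ M * μ ⟨i, hiI⟩ := hfi.trans_le (hterm _ (div_nonneg hI.le (hs _).le)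
          (div_le_one_of_le₀ (le_add_of_nonneg_right (hp _)) (hs _).le))
      _ ≤ ∑ x : Scenario Istar with p x.1 ≠ 0, M * μ x :=
        Finset.single_le_sum (f := fun x => M * μ x) (fun x _ => mul_nonneg hM₀ (hμ x))
          (by simpa using hi)

lemma apply_eq_zero_of_mem_LMOpg_of_sum_lt {c M : ℝ}
    (hw : ∀ x : Scenario Istar, gapWeight θ σ Istar x ∈ Set.Icc c M)
    (hp : ∀ i, 0 ≤ p i) (hI : 0 < p Istar) (hμ : μ ∈ stdSimplex ℝ (Scenario Istar))
    (hmass : K * (M * ∑ x : Scenario Istar with p x.1 ≠ 0, μ x) <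
      (1 - ∑ x : Scenario Istar with p x.1 ≠ 0, μ x) * c)
    (hq : q ∈ LMOpg θ σ Istar p μ) {i : Fin K} (hqi : q i ≠ 0) : p i = 0 := by
  obtain ⟨f, hf, hmax⟩ := (mem_stdSimplex_and_of_mem_convexHull_single hq).2 i hqi
  by_contra hi
  set m := ∑ x : Scenario Istar with p x.1 ≠ 0, μ x
  have hfi : f i ≤ M * m :=
    apply_le_mul_sum_of_mem_Cg (fun x => (hw x).2) hμ.1 hp hI hf hi
  have hMm : 0 ≤ M * m := by
    rw [Finset.mul_sum]
    exact Finset.sum_nonneg fun x _ =>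
      mul_nonneg (gapWeight_nonneg.trans (hw x).2) (hμ.1 x)
  have hzero : ∀ x : Scenario Istar, p x = 0 → μ x * c ≤ M * m := by
    intro x hx
    have hfx : f x = μ x * gapWeight θ σ Istar x := by
      simpa [hx, hI.ne'] using apply_scenario_of_mem_Cg hf (x := x) (by simpa [hx] using hI.ne')
    calc μ x * c ≤ f x := hfx ▸ mul_le_mul_of_nonneg_left (hw x).1 (hμ.1 x)
      _ ≤ M * m := (hmax x).trans hfi
  have hsplit : ∑ x : Scenario Istar with p x.1 = 0, μ x = 1 - m :=
    eq_sub_of_add_eq ((Finset.sum_filter_add_sum_filter_not _ _ μ).trans hμ.2)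
  refine hmass.not_ge ?_
  calc (1 - m) * c = ∑ x : Scenario Istar with p x.1 = 0, μ x * c := by
        rw [← hsplit, Finset.sum_mul]
    _ ≤ (Finset.card {x : Scenario Istar | p x.1 = 0}) • (M * m) :=
        Finset.sum_le_card_nsmul _ _ _ fun x hx => hzero x (by simpa using hx)
    _ ≤ K * (M * m) := by
        rw [nsmul_eq_mul]
        gcongr
        exact (Finset.card_le_univ _).trans (by simp)

end BestResponses


lemma eq_empty_of_forall_succ_ssubset {α : Type*} {Z : ℕ → Finset α}
    (h : ∀ k, (Z (k + 1)).Nonempty → Z (k + 1) ⊂ Z k) {m : ℕ} (hm : (Z 0).card ≤ m) :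
    Z m = ∅ := by
  have hcard : ∀ k, (Z k).card ≤ (Z 0).card - k := by
    intro k
    induction k with
    | zero => exact le_rfl
    | succ k ih =>
      rcases (Z (k + 1)).eq_empty_or_nonempty with hempty | hne
      · simp [hempty]
      · have := Finset.card_lt_card (h k hne)
        omega
  have := hcard m
  exact Finset.card_eq_zero.1 (by omega)

section SelfPlay

/-- A trajectory of the self-play inclusion: `p` and `μ` relax towards controls `q` and `ν` that
are almost everywhere selected from `LMO_p` and `LMO_μ`. -/
structure IsSelfPlayFlow {K : ℕ} (θ : Fin K → ℝ) (σ : ℝ) (Istar : Fin K) (p : ℝ → Fin K → ℝ)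
    (μ : ℝ → Scenario Istar → ℝ) (q : ℝ → Fin K → ℝ) (ν : ℝ → Scenario Istar → ℝ) : Prop where
  arm : IsSimplexFlow p q
  scenario : IsSimplexFlow μ ν
  mem_LMO : ∀ᵐ t, 0 ≤ t → q t ∈ LMOpg θ σ Istar (p t) (μ t) ∧ ν t ∈ LMOmug θ σ Istar (p t)

namespace IsSelfPlayFlow

variable {K : ℕ} {θ : Fin K → ℝ} {σ : ℝ} {Istar : Fin K} {p q : ℝ → Fin K → ℝ}
  {μ ν : ℝ → Scenario Istar → ℝ} {a b c M ε : ℝ}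

lemma of_measurable
    (hmem : ∀ t ≥ 0, p t ∈ stdSimplex ℝ (Fin K) ∧ μ t ∈ stdSimplex ℝ (Scenario Istar))
    (hq : Measurable q) (hν : Measurable ν)
    (hp : ContinuousOn p (Set.Ici 0)) (hμ : ContinuousOn μ (Set.Ici 0))
    (hsel : ∀ᵐ t ∂volume.restrict (Set.Ici (0 : ℝ)),
      q t ∈ LMOpg θ σ Istar (p t) (μ t) ∧ ν t ∈ LMOmug θ σ Istar (p t))
    (hpq : ∀ t ≥ 0, p t = p 0 + ∫ s in (0 : ℝ)..t, (q s - p s))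
    (hμν : ∀ t ≥ 0, μ t = μ 0 + ∫ s in (0 : ℝ)..t, (ν s - μ s)) :
    IsSelfPlayFlow θ σ Istar p μ q ν := by
  have hsel' := (ae_restrict_iff' measurableSet_Ici).1 hsel
  exact
    { arm := .of_measurable hq hp hpq (fun t ht => (hmem t ht).1) <| hsel'.mono fun t ht ht₀ =>
        (mem_stdSimplex_and_of_mem_convexHull_single (ht ht₀).1).1
      scenario := .of_measurable hν hμ hμν (fun t ht => (hmem t ht).2) <| hsel'.mono
        fun t ht ht₀ => (mem_stdSimplex_and_of_mem_convexHull_single (ht ht₀).2).1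
      mem_LMO := hsel' }

lemma nonempty_scenario (h : IsSelfPlayFlow θ σ Istar p μ q ν) : Nonempty (Scenario Istar) := by
  by_contra hempty
  rw [not_nonempty_iff] at hempty
  simpa using (h.scenario.mem_stdSimplex 0 le_rfl).2

theorem leader_pos (h : IsSelfPlayFlow θ σ Istar p μ q ν)
    (hw : ∀ x : Scenario Istar, 0 < gapWeight θ σ Istar x) {t : ℝ} (ht : 0 < t) :
    0 < p t Istar := by
  by_contra hpos
  have hzero : ∀ s, 0 ≤ s → s ≤ t → p s Istar = 0 := fun s hs hst =>
    ((h.arm.mem_stdSimplex s hs).1 Istar).eq_of_not_lt'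
      fun hlt => hpos (h.arm.pos_of_pos hs hst hlt)
  obtain ⟨a, ⟨ha, hat⟩, hmin⟩ :=
    exists_minimalFor_of_wellFoundedLT (· ∈ Set.Ico 0 t) (fun s => zeros (p s)) ⟨0, le_rfl, ht⟩
  have hmid : (a + t) / 2 ∈ Set.Ico 0 t := ⟨by linarith, by linarith⟩
  have hlt : zeros (p ((a + t) / 2)) ⊂ zeros (p a) := by
    refine h.arm.zeros_ssubset ha (by linarith) ?_
    filter_upwards [h.mem_LMO] with s hs hsI i hqi
    have hs₀ : 0 ≤ s := ha.trans hsI.1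
    exact apply_eq_zero_of_mem_LMOpg_of_leader_eq_zero hw (h.scenario.mem_stdSimplex s hs₀)
      (hzero s hs₀ (hsI.2.trans hmid.2.le)) (hs hs₀).1 hqi
  exact hlt.not_subset (hmin hmid hlt.subset)

-- While `p` keeps a vanishing coordinate, `min D(p, ·) = 0`, so `ν` charges only zeros of `p`.
lemma sum_scenario_le_exp_sub (h : IsSelfPlayFlow θ σ Istar p μ q ν)
    (hw : ∀ x : Scenario Istar, 0 < gapWeight θ σ Istar x) (ha : 0 < a) (hab : a ≤ b)
    (hne : (zeros (p b)).Nonempty) (hsub : zeros (p a) ⊆ zeros (p b)) :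
    ∑ x : Scenario Istar with p b x.1 ≠ 0, μ b x ≤ Real.exp (a - b) := by
  refine h.scenario.sum_le_exp_sub _ ha.le hab ?_
  filter_upwards [h.mem_LMO] with s hs hsI x hx
  have hs₀ : 0 < s := ha.trans_le hsI.1
  have hzeros := h.arm.zeros_antitoneOn
  have hp : ∃ i, p s i = 0 :=
    hne.imp fun i hi => mem_zeros.1 (hzeros hs₀.le (hs₀.le.trans hsI.2) hsI.2 hi)
  by_contra hνx
  have hpx : p s x = 0 := apply_eq_zero_of_mem_LMOmug (hw x) (h.arm.mem_stdSimplex s hs₀.le).1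
    (h.leader_pos hw hs₀) hp (hs hs₀.le).2 hνx
  refine (Finset.mem_filter.1 hx).2 (mem_zeros.1 (hsub ?_))
  exact hzeros ha.le hs₀.le hsI.1 (mem_zeros.2 hpx)

theorem zeros_ssubset_of_log_lt (h : IsSelfPlayFlow θ σ Istar p μ q ν) (hc : 0 < c)
    (hw : ∀ x : Scenario Istar, gapWeight θ σ Istar x ∈ Set.Icc c M)
    (hε : ε ∈ Set.Ioc 0 1) (hsmall : K * M * ε < (1 - ε) * c) (ha : 0 < a)
    (hab : Real.log (1 / ε) < b - a) (hne : (zeros (p b)).Nonempty) :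
    zeros (p b) ⊂ zeros (p a) := by
  obtain ⟨x₀⟩ := h.nonempty_scenario
  have hM : 0 ≤ M := hc.le.trans ((hw x₀).1.trans (hw x₀).2)
  have hw_pos : ∀ x : Scenario Istar, 0 < gapWeight θ σ Istar x := fun x => hc.trans_le (hw x).1
  have hL : 0 ≤ Real.log (1 / ε) := Real.log_nonneg (one_le_one_div hε.1 hε.2)
  set a' := a + Real.log (1 / ε)
  have haa' : a ≤ a' := le_add_of_nonneg_right hL
  have hb : 0 ≤ b := by linarith
  have hzeros := h.arm.zeros_antitoneOn
  refine (hzeros ha.le hb (by linarith)).ssubset_of_not_subset fun hsub => ?_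
  refine (h.arm.zeros_ssubset (ha.le.trans haa') (by linarith : a' < b) ?_).not_subset
    ((hzeros ha.le (ha.le.trans haa') haa').trans hsub)
  filter_upwards [h.mem_LMO] with s hs hsI i hqi
  have has : a ≤ s := haa'.trans hsI.1
  have hs₀ : 0 < s := ha.trans_le has
  have hbs : zeros (p b) ⊆ zeros (p s) := hzeros hs₀.le hb hsI.2
  have hmass : ∑ x : Scenario Istar with p s x.1 ≠ 0, μ s x ≤ ε := by
    calc _ ≤ Real.exp (a - s) :=
          h.sum_scenario_le_exp_sub hw_pos ha has (hne.mono hbs) (hsub.trans hbs)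
      _ ≤ Real.exp (-Real.log (1 / ε)) := Real.exp_le_exp.2 (by linarith [hsI.1])
      _ = ε := by rw [one_div, Real.log_inv, neg_neg, Real.exp_log hε.1]
  refine apply_eq_zero_of_mem_LMOpg_of_sum_lt hw (h.arm.mem_stdSimplex s hs₀.le).1
    (h.leader_pos hw_pos hs₀) (h.scenario.mem_stdSimplex s hs₀.le) ?_ (hs hs₀.le).1 hqi
  calc _ ≤ K * (M * ε) := by gcongr
    _ < (1 - ε) * c := by rwa [← mul_assoc]
    _ ≤ _ := by gcongr

theorem zeros_eq_empty_of_log_lt (h : IsSelfPlayFlow θ σ Istar p μ q ν) (hc : 0 < c)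
    (hw : ∀ x : Scenario Istar, gapWeight θ σ Istar x ∈ Set.Icc c M)
    (hε : ε ∈ Set.Ioc 0 1) (hsmall : K * M * ε < (1 - ε) * c) (ha : 0 < a) {r : ℝ}
    (hr : Real.log (1 / ε) < r) : zeros (p (a + (K - 1 : ℕ) * r)) = ∅ := by
  have hr₀ : 0 < r := (Real.log_nonneg (one_le_one_div hε.1 hε.2)).trans_lt hr
  refine eq_empty_of_forall_succ_ssubset (Z := fun k : ℕ => zeros (p (a + k * r)))
    (fun k hne => ?_) (Nat.le_sub_one_of_lt ?_)
  · refine h.zeros_ssubset_of_log_lt hc hw hε hsmall (by positivity) ?_ hne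
    push_cast
    linarith
  · refine (Finset.card_lt_univ_of_notMem (x := Istar) ?_).trans_eq (by simp)
    simpa using (h.leader_pos (fun x => hc.trans_le (hw x).1) ha).ne'

end IsSelfPlayFlow

end SelfPlay

section Constants

lemma mul_mul_min_lt_one_sub_min_mul {k M κ : ℝ} (hk : 0 < k) (hM : 0 < M) (hκ : 0 < κ) :
    k * M * min (1 / 2) (κ / (4 * k * M)) < (1 - min (1 / 2) (κ / (4 * k * M))) * (4 * κ) := by
  have hhalf : min (1 / 2) (κ / (4 * k * M)) ≤ 1 / 2 := min_le_left _ _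
  calc k * M * min (1 / 2) (κ / (4 * k * M)) ≤ k * M * (κ / (4 * k * M)) := by
        gcongr
        exact min_le_right _ _
    _ = κ / 4 := by field_simp
    _ < (1 - 1 / 2) * (4 * κ) := by linarith
    _ ≤ _ := by gcongr

variable {K : ℕ} {θ : Fin K → ℝ} {σ : ℝ} {Istar : Fin K}

lemma gapWeight_mem_Icc (x : Scenario Istar) :
    gapWeight θ σ Istar x ∈
      Set.Icc (4 * ⨅ x : Scenario Istar, (θ Istar - θ x) ^ 2 / (8 * σ ^ 2))
        (⨆ x : Scenario Istar, (θ Istar - θ x) ^ 2 / (2 * σ ^ 2)) := by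
  refine ⟨?_, le_ciSup (f := fun x : Scenario Istar => gapWeight θ σ Istar x)
    (Set.finite_range _).bddAbove x⟩
  calc _ ≤ 4 * ((θ Istar - θ x) ^ 2 / (8 * σ ^ 2)) := by
        gcongr
        exact ciInf_le (Set.finite_range _).bddBelow x
    _ = gapWeight θ σ Istar x := by unfold gapWeight; ring

lemma iInf_sq_div_pos [Nonempty (Scenario Istar)] (hσ : σ ≠ 0)
    (hθ : ∀ x : Scenario Istar, θ x ≠ θ Istar) :
    0 < ⨅ x : Scenario Istar, (θ Istar - θ x) ^ 2 / (8 * σ ^ 2) := by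
  obtain ⟨x, hx⟩ := exists_eq_ciInf_of_finite
    (f := fun x : Scenario Istar => (θ Istar - θ x) ^ 2 / (8 * σ ^ 2))
  have := gapWeight_pos (hθ x) hσ
  rw [← hx]
  calc 0 < gapWeight θ σ Istar x / 4 := by positivity
    _ = _ := by unfold gapWeight; ring

end Constants

theorem stmt_13_general {K : ℕ} {θ : Fin K → ℝ} {σ : ℝ} {Istar : Fin K} {p q : ℝ → Fin K → ℝ}
    {μ ν : ℝ → Scenario Istar → ℝ} {c M ε : ℝ} (h : IsSelfPlayFlow θ σ Istar p μ q ν)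
    (hc : 0 < c) (hw : ∀ x : Scenario Istar, gapWeight θ σ Istar x ∈ Set.Icc c M)
    (hε : 0 < ε) (hsmall : K * M * ε < (1 - ε) * c) :
    ∀ t > ((K : ℝ) - 1) * Real.log (1 / ε), ∀ i, 0 < p t i := by
  intro t ht i
  obtain ⟨x₀⟩ := h.nonempty_scenario
  have hM : 0 < M := hc.trans_le ((hw x₀).1.trans (hw x₀).2)
  have hε₁ : ε ≤ 1 := by
    have := pos_of_mul_pos_left ((by positivity : 0 ≤ K * M * ε).trans_lt hsmall) hc.le
    linarith
  have hK : 1 < K := by simpa using Fintype.one_lt_card_iff.2 ⟨x₀.1, Istar, x₀.2⟩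
  have hK₀ : 0 < (K : ℝ) - 1 := sub_pos.2 (Nat.one_lt_cast.2 hK)
  have hL : 0 ≤ Real.log (1 / ε) := Real.log_nonneg (one_le_one_div hε hε₁)
  obtain ⟨a, ha, hat⟩ := exists_between (sub_pos.2 ht)
  have hlog : Real.log (1 / ε) < (t - a) / (K - 1) := by rw [lt_div_iff₀' hK₀]; linarith
  have hempty := h.zeros_eq_empty_of_log_lt hc hw ⟨hε, hε₁⟩ hsmall ha hlog
  rw [Nat.cast_pred (by lia), mul_div_cancel₀ _ hK₀.ne', add_sub_cancel] at hempty
  have ht₀ : 0 ≤ t := (mul_nonneg hK₀.le hL).trans ht.le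
  refine ((h.arm.mem_stdSimplex t ht₀).1 i).lt_of_ne' fun hi => ?_
  simpa [hempty] using mem_zeros.2 hi

/-- finite-time interior entry for the Frank–Wolfe self-play flow in
Gaussian BAI. With `κ_min = min_{x∈X} (θ_{I*}−θ_x)²/(8σ²)`,
`M = max_{x∈X} (θ_{I*}−θ_x)²/(2σ²)`, `ε₀ = min{1/2, κ_min/(4KM)}` and
`T* = (K−1)(log(1/ε₀) + log 2)`, every absolutely continuous solution (integral form)
of the differential inclusion driven by a.e. selections from `LMO_p` and `LMO_μ`,
started anywhere in `Δ_K × Δ_X`, has all coordinates of `p(t)` strictly positive for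
every `t > T*`. -/
theorem stmt_13 {K : ℕ} (hK : 1 < K) (θ : Fin K → ℝ) (Istar : Fin K)
    (hmax : ∀ j ≠ Istar, θ j < θ Istar) (σ : ℝ) (hσ : 0 < σ)
    (κmin M ε₀ Tstar : ℝ)
    (hκ : κmin = ⨅ x : {x : Fin K // x ≠ Istar}, (θ Istar - θ x.1) ^ 2 / (8 * σ ^ 2))
    (hM : M = ⨆ x : {x : Fin K // x ≠ Istar}, (θ Istar - θ x.1) ^ 2 / (2 * σ ^ 2))
    (hε₀ : ε₀ = min (1 / 2) (κmin / (4 * K * M)))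
    (hT : Tstar = ((K : ℝ) - 1) * (Real.log (1 / ε₀) + Real.log 2))
    (p : ℝ → (Fin K → ℝ)) (μ : ℝ → ({x : Fin K // x ≠ Istar} → ℝ))
    (q : ℝ → (Fin K → ℝ)) (ν : ℝ → ({x : Fin K // x ≠ Istar} → ℝ))
    (hmem : ∀ t ≥ (0 : ℝ), p t ∈ stdSimplex ℝ (Fin K) ∧
      μ t ∈ stdSimplex ℝ {x : Fin K // x ≠ Istar})
    (hqmeas : Measurable q) (hνmeas : Measurable ν)
    (hpc : ContinuousOn p (Set.Ici (0 : ℝ))) (hμc : ContinuousOn μ (Set.Ici (0 : ℝ)))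
    (hsel : ∀ᵐ t ∂(volume.restrict (Set.Ici (0 : ℝ))),
      q t ∈ LMOpg θ σ Istar (p t) (μ t) ∧ ν t ∈ LMOmug θ σ Istar (p t))
    (hodep : ∀ t ≥ (0 : ℝ), p t = p 0 + ∫ s in (0 : ℝ)..t, (q s - p s))
    (hodeμ : ∀ t ≥ (0 : ℝ), μ t = μ 0 + ∫ s in (0 : ℝ)..t, (ν s - μ s)) :
    ∀ t > Tstar, ∀ i, 0 < p t i := by
  have hflow := IsSelfPlayFlow.of_measurable hmem hqmeas hνmeas hpc hμc hsel hodep hodeμ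
  have := hflow.nonempty_scenario
  have hrange : ∀ x : Scenario Istar, gapWeight θ σ Istar x ∈ Set.Icc (4 * κmin) M :=
    hκ ▸ hM ▸ gapWeight_mem_Icc
  have hκ₀ : 0 < κmin := hκ ▸ iInf_sq_div_pos hσ.ne' fun x => (hmax x x.2).ne
  have hK₀ : 0 < (K : ℝ) - 1 := sub_pos.2 (Nat.one_lt_cast.2 hK)
  have hM₀ : 0 < M := by
    obtain ⟨x⟩ := hflow.nonempty_scenario
    linarith [(hrange x).1.trans (hrange x).2]
  have hsmall : K * M * ε₀ < (1 - ε₀) * (4 * κmin) :=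
    hε₀ ▸ mul_mul_min_lt_one_sub_min_mul (by linarith) hM₀ hκ₀
  have hε₀_pos : 0 < ε₀ := by
    rw [hε₀]
    positivity
  intro t ht
  refine stmt_13_general hflow (by positivity) hrange hε₀_pos hsmall t (lt_of_le_of_lt ?_ ht)
  rw [hT]
  gcongr
  exact le_add_of_nonneg_right (Real.log_nonneg one_le_two)

end
end
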